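/- arXiv:1502.05332 — 3 statements merged into one kernel-verified Lean document; each statement's English description precedes it below -/
import Mathlib

section
/- Let S be a set of 2k points in the plane in general position, and let Q be a point of S lying in the interior of the convex hull of S. Then there exists a point A ∈ S with A ≠ Q such that the line through Q and A halves S: each of the two open half-planes bounded by this line contains exactly k − 1 points of S. -/
open scoped Classical

/-- Points in the plane. -/
abbrev Pt : Type := ℝ × ℝ

/-- A finite planar point set is in *general position* if no three of its
points are collinear. -/
def GeneralPosition (S : Finset Pt) : Prop :=
  ∀ p ∈ S, ∀ q ∈ S, ∀ r ∈ S, p ≠ q → p ≠ r → q ≠ r →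
    ¬ Collinear ℝ ({p, q, r} : Set Pt)

/-- The closed straight-line segment spanned by an unordered pair of points. -/
noncomputable def seg : Sym2 Pt → Set Pt :=
  Sym2.lift ⟨fun a b => segment ℝ a b, fun a b => segment_symm ℝ a b⟩

/-- `M` is a non-crossing perfect matching of `S`: a partition of `S` into
unordered pairs (of distinct points) whose closed segments are pairwise disjoint. -/
def IsNCMatching (S : Finset Pt) (M : Finset (Sym2 Pt)) : Prop :=
  (∀ e ∈ M, ¬ e.IsDiag) ∧
  (∀ e ∈ M, ∀ p, p ∈ e → p ∈ S) ∧
  (∀ p ∈ S, ∃! e, e ∈ M ∧ p ∈ e) ∧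
  (∀ e ∈ M, ∀ f ∈ M, e ≠ f → Disjoint (seg e) (seg f))

/-- The number of non-crossing perfect matchings of `S`. -/
noncomputable def pm (S : Finset Pt) : ℕ :=
  Set.ncard {M : Finset (Sym2 Pt) | IsNCMatching S M}

/-- `S` is in convex position: no point of `S` lies in the convex hull of the
other points. -/
def ConvexPosition (S : Finset Pt) : Prop :=
  ∀ p ∈ S, p ∉ convexHull ℝ (↑(S.erase p) : Set Pt)

/-- The signed side of `X` with respect to the directed line from `Q` to `P`.
The two open half-planes bounded by the line through `Q` and `P` are
`{X | 0 < sideOf Q P X}` and `{X | sideOf Q P X < 0}`. -/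
def sideOf (Q P X : Pt) : ℝ :=
  (P.1 - Q.1) * (X.2 - Q.2) - (P.2 - Q.2) * (X.1 - Q.1)

/-- Segment `AB` pierces segment `CD`: the closed segments are disjoint, but the
affine line through `A` and `B` meets the closed segment `CD`. -/
def Pierces (A B C D : Pt) : Prop :=
  Disjoint (segment ℝ A B) (segment ℝ C D) ∧
  ((affineSpan ℝ ({A, B} : Set Pt) : Set Pt) ∩ segment ℝ C D).Nonempty

/-- The matching `M` of `S` has the *piercing property*: it contains pairs
`{A,B}` and `{C,D}` with `A` on the boundary of the convex hull of `S`
and `AB` piercing `CD`. -/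
def HasPiercing (S : Finset Pt) (M : Finset (Sym2 Pt)) : Prop :=
  ∃ A B C D : Pt, s(A, B) ∈ M ∧ s(C, D) ∈ M ∧
    A ∈ frontier (convexHull ℝ (S : Set Pt)) ∧ Pierces A B C D

/-- The exceptional order type with interior point `Q`: `Q` is the unique point
of `S` interior to the convex hull of `S`, and for every other point `P` of `S`
each open half-plane bounded by the line through `Q` and `P` contains exactly
two points of `S`. -/
def ExceptionalAt (S : Finset Pt) (Q : Pt) : Prop :=
  (↑S ∩ interior (convexHull ℝ (S : Set Pt))) = {Q} ∧
  ∀ P ∈ S, P ≠ Q →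
    (S.filter (fun X => 0 < sideOf Q P X)).card = 2 ∧
    (S.filter (fun X => sideOf Q P X < 0)).card = 2

/-- The exceptional order type of Figure 1. -/
def Exceptional (S : Finset Pt) : Prop :=
  ∃ Q ∈ S, ExceptionalAt S Q

/-!
Let `T` be `S` without `Q`, viewed as a set of an odd number of vectors based at `Q`. Choose
coordinates in which no vector of `T` has first coordinate `0`, give each vector the sign of its
first coordinate, and sort `T` by slope. The number of points to the left of the line through `Q`
and `A` minus the number to its right is, up to the sign of `A`, the sum of the signs above `A` in
this order minus the sum of the signs below `A`. The partial sums of the signs move in unit steps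
from `0` to an odd total `s`, so at some `A` they jump between the two integers nearest `s / 2`;
there the signs above and below `A` have equal sums.
-/

open Finset SignType

section PartialSums

variable {ι α : Type*} [LinearOrder α]

lemma exists_sum_lt_le_and_lt_sum_le {M : Type*} [AddCommMonoid M] [LinearOrder M]
    (κ : ι → α) (w : ι → M) {m : M} (hm : 0 ≤ m) (T : Finset ι) (hT : m < ∑ i ∈ T, w i) :
    ∃ a ∈ T, ∑ b ∈ T with κ b < κ a, w b ≤ m ∧ m < ∑ b ∈ T with κ b ≤ κ a, w b := by
  induction T using Finset.strongInduction with
  | H T ih =>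
    have hne : T.Nonempty := nonempty_of_sum_ne_zero (hm.trans_lt hT).ne'
    obtain ⟨top, htop, hmax⟩ := T.exists_max_image κ hne
    rcases le_or_gt (∑ b ∈ T with κ b < κ top, w b) m with hle | hlt
    · exact ⟨top, htop, hle, by rwa [filter_true_of_mem hmax]⟩
    · have hssub : {b ∈ T | κ b < κ top} ⊂ T := filter_ssubset.2 ⟨top, htop, lt_irrefl _⟩
      obtain ⟨a, ha, hbelow, habove⟩ := ih _ hssub hlt
      obtain ⟨haT, hatop⟩ := mem_filter.1 ha
      have hfilter_lt : {b ∈ {b ∈ T | κ b < κ top} | κ b < κ a} = {b ∈ T | κ b < κ a} := by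
        grind
      have hfilter_le : {b ∈ {b ∈ T | κ b < κ top} | κ b ≤ κ a} = {b ∈ T | κ b ≤ κ a} := by
        grind
      rw [hfilter_lt] at hbelow
      rw [hfilter_le] at habove
      exact ⟨a, haT, hbelow, habove⟩

lemma sum_filter_le_eq_sum_filter_lt_add {M : Type*} [AddCommMonoid M] {T : Finset ι}
    {κ : ι → α} (hκ : Set.InjOn κ T) (w : ι → M) {a : ι} (ha : a ∈ T) :
    ∑ b ∈ T with κ b ≤ κ a, w b = ∑ b ∈ T with κ b < κ a, w b + w a := by
  have hinsert : {b ∈ T | κ b ≤ κ a} = insert a {b ∈ T | κ b < κ a} := by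
    ext b
    have hinj : b ∈ T → κ b = κ a → b = a := fun hb h ↦ hκ hb ha h
    grind
  rw [hinsert, sum_insert (by simp), add_comm]

lemma odd_sum_of_odd_card {T : Finset ι} {w : ι → ℤ} (hw : ∀ i ∈ T, Odd (w i))
    (hT : Odd #T) : Odd (∑ i ∈ T, w i) := by
  have heven : Even (∑ i ∈ T, (w i - 1)) :=
    even_iff_two_dvd.2 <| dvd_sum fun i hi ↦ even_iff_two_dvd.1 <| (hw i hi).sub_odd odd_one
  have hsum : ∑ i ∈ T, w i = ∑ i ∈ T, (w i - 1) + #T := by simp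
  exact hsum ▸ heven.add_odd (by exact_mod_cast hT)

lemma exists_sum_filter_gt_eq_sum_filter_lt {T : Finset ι} {κ : ι → α} (hκ : Set.InjOn κ T)
    {ε : ι → ℤ} (hε : ∀ i ∈ T, IsUnit (ε i)) (hT : Odd #T) :
    ∃ a ∈ T, ∑ b ∈ T with κ a < κ b, ε b = ∑ b ∈ T with κ b < κ a, ε b := by
  have hodd : Odd (∑ i ∈ T, ε i) :=
    odd_sum_of_odd_card (fun i hi ↦ by rcases Int.isUnit_iff.1 (hε i hi) with h | h <;> simp [h]) hT
  wlog hpos : 0 < ∑ i ∈ T, ε i generalizing ε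
  · have hneg : 0 < ∑ i ∈ T, -ε i := by
      have hne : ∑ i ∈ T, ε i ≠ 0 := fun h ↦ by simp [h] at hodd
      rw [sum_neg_distrib]
      lia
    obtain ⟨a, ha, hbal⟩ := this (fun i hi ↦ (hε i hi).neg)
      (by simpa only [sum_neg_distrib] using hodd.neg) hneg
    exact ⟨a, ha, by simpa only [sum_neg_distrib, neg_inj] using hbal⟩
  obtain ⟨m, hm⟩ := hodd
  obtain ⟨a, ha, hbelow, habove⟩ :=
    exists_sum_lt_le_and_lt_sum_le κ ε (m := m) (by lia) T (by lia)
  have hstep := sum_filter_le_eq_sum_filter_lt_add hκ ε ha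
  have hsplit := sum_filter_add_sum_filter_not T (fun b ↦ κ b ≤ κ a) ε
  simp only [not_le] at hsplit
  refine ⟨a, ha, ?_⟩
  rcases Int.isUnit_iff.1 (hε a ha) with h | h <;> lia

end PartialSums

section SignCounts

variable {ι α : Type*} [Zero α]

lemma sum_sign_eq_card_pos_sub_card_neg [Preorder α] [DecidableLT α] (T : Finset ι) (f : ι → α) :
    ∑ i ∈ T, (sign (f i) : ℤ) = #{i ∈ T | 0 < f i} - #{i ∈ T | f i < 0} := by
  rw [card_filter, card_filter]
  push_cast
  rw [← sum_sub_distrib]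
  refine sum_congr rfl fun i _ ↦ ?_
  rw [sign_apply]
  split_ifs with hpos hneg
  · exact absurd hneg hpos.not_gt
  all_goals simp

lemma card_pos_add_card_neg_add_card_zero [LinearOrder α] (T : Finset ι) (f : ι → α) :
    #{i ∈ T | 0 < f i} + #{i ∈ T | f i < 0} + #{i ∈ T | f i = 0} = #T := by
  simp only [card_filter, card_eq_sum_ones T, ← sum_add_distrib]
  refine sum_congr rfl fun i _ ↦ ?_
  rcases lt_trichotomy (f i) 0 with h | h | h
  · simp [h, h.not_gt, h.ne]
  · simp [h]
  · simp [h, h.not_gt, h.ne']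

end SignCounts

section PlaneVectors

variable {ι 𝕜 : Type*} [Field 𝕜]

lemma exists_shear_ne_zero [Infinite 𝕜] (T : Finset ι) (x y : ι → 𝕜)
    (hxy : ∀ i ∈ T, x i ≠ 0 ∨ y i ≠ 0) : ∃ t : 𝕜, ∀ i ∈ T, x i + t * y i ≠ 0 := by
  obtain ⟨t, ht⟩ := Infinite.exists_notMem_finset (T.image fun i ↦ -x i / y i)
  refine ⟨t, fun i hi hzero ↦ ?_⟩
  by_cases hy : y i = 0
  · exact (hxy i hi).elim (fun hx ↦ hx (by simpa [hy] using hzero)) (fun hy' ↦ hy' hy)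
  · exact ht (mem_image.2 ⟨i, hi, by rw [div_eq_iff hy]; linear_combination -hzero⟩)

variable [LinearOrder 𝕜] [IsStrictOrderedRing 𝕜]

lemma sum_sign_det_eq_of_ne_zero {T : Finset ι} {x : ι → 𝕜} (y : ι → 𝕜)
    (hx : ∀ i ∈ T, x i ≠ 0) {a : ι} (ha : a ∈ T) :
    ∑ j ∈ T, (sign (x a * y j - y a * x j) : ℤ) =
      sign (x a) * (∑ j ∈ T with y a / x a < y j / x j, (sign (x j) : ℤ) -
        ∑ j ∈ T with y j / x j < y a / x a, (sign (x j) : ℤ)) := by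
  rw [sum_filter, sum_filter, ← sum_sub_distrib, mul_sum]
  refine sum_congr rfl fun j hj ↦ ?_
  have hxa := hx a ha
  have hxj := hx j hj
  have hdet : x a * y j - y a * x j = x a * (x j * (y j / x j - y a / x a)) := by
    field_simp
  rw [hdet, sign_mul, sign_mul, SignType.coe_mul, SignType.coe_mul]
  rcases lt_trichotomy (y a / x a) (y j / x j) with h | h | h
  · simp [h, h.not_gt, sign_pos (sub_pos.2 h)]
  · simp [h]
  · simp [h, h.not_gt, sign_neg (sub_neg.2 h)]

lemma exists_sum_sign_det_eq_zero_of_ne_zero {T : Finset ι} {x y : ι → 𝕜}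
    (hx : ∀ i ∈ T, x i ≠ 0)
    (hdet : (T : Set ι).Pairwise fun i j ↦ x i * y j - y i * x j ≠ 0) (hT : Odd #T) :
    ∃ a ∈ T, ∑ j ∈ T, (sign (x a * y j - y a * x j) : ℤ) = 0 := by
  have hslope : Set.InjOn (fun i ↦ y i / x i) T := by
    intro i hi j hj hij
    by_contra hne
    have hcross := (div_eq_div_iff (hx i hi) (hx j hj)).1 hij
    exact hdet hi hj hne (by linear_combination -hcross)
  have hunit : ∀ i ∈ T, IsUnit (sign (x i) : ℤ) := fun i hi ↦ by
    rcases (hx i hi).lt_or_gt with h | h <;> simp [h]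
  obtain ⟨a, ha, hbal⟩ := exists_sum_filter_gt_eq_sum_filter_lt hslope hunit hT
  exact ⟨a, ha, by rw [sum_sign_det_eq_of_ne_zero y hx ha, hbal, sub_self, mul_zero]⟩

lemma exists_sum_sign_det_eq_zero {T : Finset ι} {x y : ι → 𝕜}
    (hxy : ∀ i ∈ T, x i ≠ 0 ∨ y i ≠ 0)
    (hdet : (T : Set ι).Pairwise fun i j ↦ x i * y j - y i * x j ≠ 0) (hT : Odd #T) :
    ∃ a ∈ T, ∑ j ∈ T, (sign (x a * y j - y a * x j) : ℤ) = 0 := by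
  have : Infinite 𝕜 := CharZero.infinite 𝕜
  obtain ⟨t, ht⟩ := exists_shear_ne_zero T x y hxy
  have hshear (i j : ι) :
      (x i + t * y i) * y j - y i * (x j + t * y j) = x i * y j - y i * x j := by ring
  simpa only [hshear] using
    exists_sum_sign_det_eq_zero_of_ne_zero (y := y) ht (by simpa only [hshear] using hdet) hT

end PlaneVectors

section SideOf

lemma sideOf_self_left (Q A : Pt) : sideOf Q A Q = 0 := by
  simp [sideOf]

lemma sideOf_self_right (Q A : Pt) : sideOf Q A A = 0 := by
  simp only [sideOf]
  ring

lemma collinear_of_sideOf_eq_zero {Q A X : Pt} (h : sideOf Q A X = 0) :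
    Collinear ℝ ({Q, A, X} : Set Pt) := by
  rcases eq_or_ne A Q with rfl | hAQ
  · simpa using collinear_pair ℝ A X
  have hnorm : (A.1 - Q.1) ^ 2 + (A.2 - Q.2) ^ 2 ≠ 0 := fun h0 ↦
    hAQ (Prod.ext (by nlinarith) (by nlinarith))
  -- `r` is the coefficient of the orthogonal projection of `X - Q` to `A - Q`.
  let r := ((X.1 - Q.1) * (A.1 - Q.1) + (X.2 - Q.2) * (A.2 - Q.2)) /
    ((A.1 - Q.1) ^ 2 + (A.2 - Q.2) ^ 2)
  have hX : X = r • (A - Q) +ᵥ Q := by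
    simp only [sideOf] at h
    refine Prod.ext ?_ ?_
    · simp only [r, vadd_eq_add, Prod.fst_add, Prod.smul_fst, Prod.fst_sub, smul_eq_mul]
      field_simp
      linear_combination -(A.2 - Q.2) * h
    · simp only [r, vadd_eq_add, Prod.snd_add, Prod.smul_snd, Prod.snd_sub, smul_eq_mul]
      field_simp
      linear_combination (A.1 - Q.1) * h
  refine (collinear_iff_of_mem (p₀ := Q) (by simp)).2 ⟨A - Q, ?_⟩
  rintro p (rfl | rfl | rfl)
  exacts [⟨0, by simp⟩, ⟨1, by simp⟩, ⟨r, hX⟩]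

/-- The part of `GeneralPosition` that concerns lines through `Q`: no such line contains two points
of `S` other than `Q`. The point `Q` need not belong to `S`. -/
def GeneralPositionAt (S : Finset Pt) (Q : Pt) : Prop :=
  ∀ A ∈ S, ∀ X ∈ S, Q ≠ A → Q ≠ X → A ≠ X → ¬ Collinear ℝ ({Q, A, X} : Set Pt)

variable {S : Finset Pt} {Q : Pt}

lemma filter_sideOf_eq_zero
    (hS : GeneralPositionAt S Q) (hQ : Q ∈ S) {A : Pt} (hA : A ∈ S) (hAQ : A ≠ Q) :
    {X ∈ S | sideOf Q A X = 0} = {Q, A} := by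
  ext X
  simp only [mem_filter, mem_insert, mem_singleton]
  constructor
  · rintro ⟨hX, hzero⟩
    by_contra! hne
    exact hS A hA X hX hAQ.symm hne.1.symm hne.2.symm (collinear_of_sideOf_eq_zero hzero)
  · rintro (rfl | rfl)
    exacts [⟨hQ, sideOf_self_left _ _⟩, ⟨hA, sideOf_self_right _ _⟩]

lemma exists_sum_sign_sideOf_eq_zero
    (hS : GeneralPositionAt S Q) (hodd : Odd #(S.erase Q)) :
    ∃ A ∈ S, A ≠ Q ∧ ∑ X ∈ S, (sign (sideOf Q A X) : ℤ) = 0 := by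
  have hne_zero : ∀ X ∈ S.erase Q, X.1 - Q.1 ≠ 0 ∨ X.2 - Q.2 ≠ 0 := by
    intro X hX
    by_contra! h
    exact ne_of_mem_erase hX (Prod.ext (sub_eq_zero.1 h.1) (sub_eq_zero.1 h.2))
  have hside : (S.erase Q : Set Pt).Pairwise fun A X ↦ sideOf Q A X ≠ 0 := by
    intro A hA X hX hAX hzero
    obtain ⟨hAQ, hAS⟩ := mem_erase.1 hA
    obtain ⟨hXQ, hXS⟩ := mem_erase.1 hX
    exact hS A hAS X hXS hAQ.symm hXQ.symm hAX (collinear_of_sideOf_eq_zero hzero)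
  obtain ⟨A, hA, hsum⟩ := exists_sum_sign_det_eq_zero hne_zero hside hodd
  obtain ⟨hAQ, hAS⟩ := mem_erase.1 hA
  refine ⟨A, hAS, hAQ, ?_⟩
  rw [← sum_erase S (a := Q) (by simp [sideOf_self_left])]
  exact hsum

end SideOf

theorem exists_halving_line_general (k : ℕ) (S : Finset Pt) (hcard : #S = 2 * k)
    (Q : Pt) (hQ : Q ∈ S) (hS : GeneralPositionAt S Q) :
    ∃ A ∈ S, A ≠ Q ∧ #{X ∈ S | 0 < sideOf Q A X} = k - 1 ∧
      #{X ∈ S | sideOf Q A X < 0} = k - 1 := by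
  have hodd : Odd #(S.erase Q) := by
    have hpos := card_pos.2 ⟨Q, hQ⟩
    rw [card_erase_of_mem hQ, hcard]
    exact ⟨k - 1, by lia⟩
  obtain ⟨A, hA, hAQ, hbal⟩ := exists_sum_sign_sideOf_eq_zero hS hodd
  rw [sum_sign_eq_card_pos_sub_card_neg] at hbal
  have htotal := card_pos_add_card_neg_add_card_zero S (sideOf Q A)
  rw [filter_sideOf_eq_zero hS hQ hA hAQ, card_pair hAQ.symm, hcard] at htotal
  exact ⟨A, hA, hAQ, by lia, by lia⟩

/-- If `Q` is a point of a `2k`-point set `S` in general position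
lying in the interior of the convex hull of `S`, then some line through `Q`
and another point `A` of `S` halves `S`: each open half-plane it bounds
contains exactly `k - 1` points of `S`. -/
theorem exists_halving_line (k : ℕ) (S : Finset Pt) (hcard : S.card = 2 * k)
    (hgp : GeneralPosition S) (Q : Pt) (hQ : Q ∈ S)
    (hint : Q ∈ interior (convexHull ℝ (S : Set Pt))) :
    ∃ A ∈ S, A ≠ Q ∧
      (S.filter (fun X => 0 < sideOf Q A X)).card = k - 1 ∧
      (S.filter (fun X => sideOf Q A X < 0)).card = k - 1 :=
  exists_halving_line_general k S hcard Q hQ (hgp Q hQ)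
end

section
/- Let S be a set of points in the plane in general position, let A, B ∈ S be distinct, and suppose the line ℓ through A and B contains no other point of S. Let S₁ and S₂ be the subsets of S \ {A, B} lying in the two open half-planes bounded by ℓ. Then the number of non-crossing perfect matchings of S that contain the pair {A,B} is at least pm(S₁) · pm(S₂). -/
open scoped Classical

/-!
The pair `{A, B}` lies on `ℓ`, `S₁` lies strictly on one side of `ℓ` and `S₂` strictly on the other.
Hence `ℓ` separates the convex hull of `{A, B}` from that of `S₁`, and the convex hull of
`{A, B} ∪ S₁` from that of `S₂`. Matchings of point sets with disjoint convex hulls can be united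
freely, and the union determines both of them, so the counts multiply. Adjoining first `S₁` and then
`S₂` to the matching `{{A, B}}` gives the bound.
-/

section General

lemma injOn_sup_of_disjoint {α : Type*} [DistribLattice α] [OrderBot α] {u v : α}
    (huv : Disjoint u v) :
    Set.InjOn (fun x : α × α => x.1 ⊔ x.2) (Set.Iic u ×ˢ Set.Iic v) := by
  have sup_inf_fst {a b : α} (ha : a ≤ u) (hb : b ≤ v) : (a ⊔ b) ⊓ u = a := by
    rw [inf_sup_right, inf_eq_left.2 ha, (huv.symm.mono_left hb).eq_bot, sup_bot_eq]
  have sup_inf_snd {a b : α} (ha : a ≤ u) (hb : b ≤ v) : (a ⊔ b) ⊓ v = b := by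
    rw [inf_sup_right, inf_eq_left.2 hb, (huv.mono_left ha).eq_bot, bot_sup_eq]
  rintro ⟨a, b⟩ ⟨ha, hb⟩ ⟨c, d⟩ ⟨hc, hd⟩ (h : a ⊔ b = c ⊔ d)
  exact Prod.ext (by rw [← sup_inf_fst ha hb, h, sup_inf_fst hc hd])
    (by rw [← sup_inf_snd ha hb, h, sup_inf_snd hc hd])

lemma disjoint_finset_sym2 {α : Type*} {s t : Finset α} (h : Disjoint s t) :
    Disjoint s.sym2 t.sym2 :=
  Finset.disjoint_left.2 fun e hs ht =>
    Finset.disjoint_left.1 h (Finset.mem_sym2_iff.1 hs _ e.out_fst_mem)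
      (Finset.mem_sym2_iff.1 ht _ e.out_fst_mem)

lemma disjoint_convexHull_of_mapsTo {𝕜 E F : Type*} [Ring 𝕜] [PartialOrder 𝕜]
    [AddCommGroup E] [AddCommGroup F] [Module 𝕜 E] [Module 𝕜 F]
    (f : E →ᵃ[𝕜] F) {s t : Set E} {C D : Set F} (hC : Convex 𝕜 C) (hD : Convex 𝕜 D)
    (hs : Set.MapsTo f s C) (ht : Set.MapsTo f t D) (hCD : Disjoint C D) :
    Disjoint (convexHull 𝕜 s) (convexHull 𝕜 t) :=
  (hCD.preimage f).mono (convexHull_min hs (hC.affine_preimage f))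
    (convexHull_min ht (hD.affine_preimage f))

lemma disjoint_of_disjoint_convexHull {𝕜 E : Type*} [Semiring 𝕜] [PartialOrder 𝕜]
    [AddCommMonoid E] [Module 𝕜 E] {s t : Set E}
    (h : Disjoint (convexHull 𝕜 s) (convexHull 𝕜 t)) : Disjoint s t :=
  h.mono (subset_convexHull 𝕜 s) (subset_convexHull 𝕜 t)

end General

section Matchings

lemma seg_subset_convexHull {s : Set Pt} {e : Sym2 Pt} (he : ∀ p ∈ e, p ∈ s) :
    seg e ⊆ convexHull ℝ s := by
  induction e with
  | _ p q => exact segment_subset_convexHull (he p (by simp)) (he q (by simp))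

/-- The non-crossing perfect matchings of `S` that contain the pair `e`; these are the matchings
counted by the main theorem. -/
def matchingsThrough (S : Finset Pt) (e : Sym2 Pt) : Set (Finset (Sym2 Pt)) :=
  {M | IsNCMatching S M ∧ e ∈ M}

variable {S S₁ S₂ : Finset Pt} {M M₁ M₂ : Finset (Sym2 Pt)}

lemma IsNCMatching.subset_sym2 (hM : IsNCMatching S M) : M ⊆ S.sym2 :=
  fun e he => Finset.mem_sym2_iff.2 (hM.2.1 e he)

lemma finite_matchingsThrough (S : Finset Pt) (e : Sym2 Pt) : (matchingsThrough S e).Finite :=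
  S.sym2.powerset.finite_toSet.subset fun _ hM => Finset.mem_powerset.2 hM.1.subset_sym2

lemma isNCMatching_pair {A B : Pt} (hAB : A ≠ B) : IsNCMatching {A, B} {s(A, B)} := by
  refine ⟨by simpa using hAB, by simp, fun p hp => ⟨s(A, B), by simpa using hp, ?_⟩, by simp⟩
  exact fun e he => Finset.mem_singleton.1 he.1

lemma one_le_ncard_matchingsThrough_pair {A B : Pt} (hAB : A ≠ B) :
    1 ≤ (matchingsThrough {A, B} s(A, B)).ncard :=
  (Set.ncard_pos (finite_matchingsThrough _ _)).2
    ⟨{s(A, B)}, isNCMatching_pair hAB, Finset.mem_singleton_self _⟩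

lemma IsNCMatching.existsUnique_mem_union_of_mem_left (hM₁ : IsNCMatching S₁ M₁)
    (hM₂ : IsNCMatching S₂ M₂) (h : Disjoint S₁ S₂) {p : Pt} (hp : p ∈ S₁) :
    ∃! e, e ∈ M₁ ∪ M₂ ∧ p ∈ e := by
  obtain ⟨e, ⟨he, hpe⟩, he_unique⟩ := hM₁.2.2.1 p hp
  refine ⟨e, ⟨Finset.mem_union_left _ he, hpe⟩, fun f ⟨hf, hpf⟩ => ?_⟩
  have hfM₂ : f ∉ M₂ := fun hf => Finset.disjoint_left.1 h hp (hM₂.2.1 f hf p hpf)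
  exact he_unique f ⟨(Finset.mem_union.1 hf).resolve_right hfM₂, hpf⟩

lemma IsNCMatching.union (hM₁ : IsNCMatching S₁ M₁) (hM₂ : IsNCMatching S₂ M₂)
    (h : Disjoint (convexHull ℝ (S₁ : Set Pt)) (convexHull ℝ (S₂ : Set Pt))) :
    IsNCMatching (S₁ ∪ S₂) (M₁ ∪ M₂) := by
  have hS : Disjoint S₁ S₂ := Finset.disjoint_coe.1 (disjoint_of_disjoint_convexHull h)
  have disjoint_seg : ∀ e ∈ M₁, ∀ f ∈ M₂, Disjoint (seg e) (seg f) := fun e he f hf =>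
    h.mono (seg_subset_convexHull (hM₁.2.1 e he)) (seg_subset_convexHull (hM₂.2.1 f hf))
  refine ⟨?_, ?_, ?_, ?_⟩
  · exact fun e he => (Finset.mem_union.1 he).elim (hM₁.1 e) (hM₂.1 e)
  · exact fun e he p hp => Finset.mem_union.2 <|
      (Finset.mem_union.1 he).imp (hM₁.2.1 e · p hp) (hM₂.2.1 e · p hp)
  · intro p hp
    rcases Finset.mem_union.1 hp with hp | hp
    · exact hM₁.existsUnique_mem_union_of_mem_left hM₂ hS hp
    · rw [Finset.union_comm]
      exact hM₂.existsUnique_mem_union_of_mem_left hM₁ hS.symm hp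
  · intro e he f hf hef
    rcases Finset.mem_union.1 he with he | he <;> rcases Finset.mem_union.1 hf with hf | hf
    · exact hM₁.2.2.2 e he f hf hef
    · exact disjoint_seg e he f hf
    · exact (disjoint_seg f hf e he).symm
    · exact hM₂.2.2.2 e he f hf hef

lemma ncard_matchingsThrough_mul_pm_le (e : Sym2 Pt)
    (h : Disjoint (convexHull ℝ (S₁ : Set Pt)) (convexHull ℝ (S₂ : Set Pt))) :
    (matchingsThrough S₁ e).ncard * pm S₂ ≤ (matchingsThrough (S₁ ∪ S₂) e).ncard := by
  have hS : Disjoint S₁ S₂ := Finset.disjoint_coe.1 (disjoint_of_disjoint_convexHull h)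
  have hinj : Set.InjOn (fun M => M.1 ∪ M.2) (matchingsThrough S₁ e ×ˢ {M | IsNCMatching S₂ M}) :=
    (injOn_sup_of_disjoint (disjoint_finset_sym2 hS)).mono <|
      Set.prod_mono (fun _ hM => hM.1.subset_sym2) fun _ hM => hM.subset_sym2
  rw [pm, ← Set.ncard_prod]
  exact Set.ncard_le_ncard_of_injOn (fun M => M.1 ∪ M.2)
    (fun _ hM => ⟨hM.1.1.union hM.2 h, Finset.mem_union_left _ hM.1.2⟩)
    hinj (finite_matchingsThrough _ e)

end Matchings

section Sides

/-- `sideOf A B` bundled as an affine map, so that half-planes bounded by the line `AB` are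
preimages of intervals. -/
def sideOfAffineMap (A B : Pt) : Pt →ᵃ[ℝ] ℝ where
  toFun := sideOf A B
  linear := (B.1 - A.1) • LinearMap.snd ℝ ℝ ℝ - (B.2 - A.2) • LinearMap.fst ℝ ℝ ℝ
  map_vadd' p v := by
    simp only [sideOf, vadd_eq_add, Prod.fst_add, Prod.snd_add, LinearMap.sub_apply,
      LinearMap.smul_apply, LinearMap.fst_apply, LinearMap.snd_apply, smul_eq_mul]
    ring

variable {A B : Pt}

lemma mem_affineSpan_pair_of_sideOf_eq_zero (hAB : A ≠ B) {P : Pt} (h : sideOf A B P = 0) :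
    P ∈ line[ℝ, A, B] := by
  have hd : (B.1 - A.1) ^ 2 + (B.2 - A.2) ^ 2 ≠ 0 := fun h0 => hAB <| Prod.ext
    (by nlinarith [sq_nonneg (B.1 - A.1), sq_nonneg (B.2 - A.2)])
    (by nlinarith [sq_nonneg (B.1 - A.1), sq_nonneg (B.2 - A.2)])
  -- `t` is the coordinate of the orthogonal projection of `P` to the line `AB`.
  let t := ((P.1 - A.1) * (B.1 - A.1) + (P.2 - A.2) * (B.2 - A.2)) /
    ((B.1 - A.1) ^ 2 + (B.2 - A.2) ^ 2)
  have hP : AffineMap.lineMap A B t = P := by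
    rw [sideOf] at h
    rw [AffineMap.lineMap_apply_module']
    ext
    · simp only [t, Prod.fst_add, Prod.smul_fst, Prod.fst_sub, smul_eq_mul]
      field_simp
      linear_combination (B.2 - A.2) * h
    · simp only [t, Prod.snd_add, Prod.smul_snd, Prod.snd_sub, smul_eq_mul]
      field_simp
      linear_combination -(B.1 - A.1) * h
  exact hP ▸ AffineMap.lineMap_mem_affineSpan_pair t A B

lemma sideOf_eq_zero_of_mem_pair {P : Pt} (hP : P ∈ ({A, B} : Finset Pt)) :
    sideOf A B P = 0 := by
  rcases Finset.mem_insert.1 hP with rfl | hP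
  · simp [sideOf]
  · rw [Finset.mem_singleton.1 hP, sideOf]
    ring

lemma disjoint_convexHull_pair_filter_sideOf_pos (S : Finset Pt) :
    Disjoint (convexHull ℝ (({A, B} : Finset Pt) : Set Pt))
      (convexHull ℝ (S.filter (fun X => 0 < sideOf A B X) : Set Pt)) :=
  disjoint_convexHull_of_mapsTo (sideOfAffineMap A B) (convex_singleton 0) (convex_Ioi 0)
    (fun _ hP => sideOf_eq_zero_of_mem_pair hP) (fun _ hP => (Finset.mem_filter.1 hP).2)
    (by simp)

lemma disjoint_convexHull_pair_union_filter_sideOf_neg (S : Finset Pt) :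
    Disjoint (convexHull ℝ (({A, B} ∪ S.filter (fun X => 0 < sideOf A B X) : Finset Pt) : Set Pt))
      (convexHull ℝ (S.filter (fun X => sideOf A B X < 0) : Set Pt)) :=
  disjoint_convexHull_of_mapsTo (sideOfAffineMap A B) (convex_Ici 0) (convex_Iio 0)
    (fun _ hP => (Finset.mem_union.1 hP).elim (fun hP => (sideOf_eq_zero_of_mem_pair hP).ge)
      fun hP => (Finset.mem_filter.1 hP).2.le)
    (fun _ hP => (Finset.mem_filter.1 hP).2) (Set.Iio_disjoint_Ici le_rfl).symm

lemma pair_union_filter_sideOf {S : Finset Pt} (hA : A ∈ S) (hB : B ∈ S) (hAB : A ≠ B)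
    (hline : ∀ P ∈ S, P ≠ A → P ≠ B → P ∉ (line[ℝ, A, B] : Set Pt)) :
    {A, B} ∪ S.filter (fun X => 0 < sideOf A B X) ∪ S.filter (fun X => sideOf A B X < 0) = S := by
  refine Finset.Subset.antisymm (by simp [Finset.union_subset_iff, Finset.insert_subset_iff, *]) ?_
  intro P hP
  rcases lt_trichotomy (sideOf A B P) 0 with hneg | hzero | hpos
  · exact Finset.mem_union_right _ (Finset.mem_filter.2 ⟨hP, hneg⟩)
  · have hP_pair : P = A ∨ P = B := by
      by_contra! hne
      exact hline P hP hne.1 hne.2 (mem_affineSpan_pair_of_sideOf_eq_zero hAB hzero)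
    exact Finset.mem_union_left _ (Finset.mem_union_left _ (by simpa using hP_pair))
  · exact Finset.mem_union_left _ (Finset.mem_union_right _ (Finset.mem_filter.2 ⟨hP, hpos⟩))

end Sides

theorem mul_pm_le_card_matchings_through_edge_general (S : Finset Pt)
    (A B : Pt) (hA : A ∈ S) (hB : B ∈ S) (hAB : A ≠ B)
    (hline : ∀ P ∈ S, P ≠ A → P ≠ B →
      P ∉ (affineSpan ℝ ({A, B} : Set Pt) : Set Pt)) :
    pm (S.filter (fun X => 0 < sideOf A B X)) *
      pm (S.filter (fun X => sideOf A B X < 0)) ≤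
    Set.ncard {M : Finset (Sym2 Pt) | IsNCMatching S M ∧ s(A, B) ∈ M} := by
  set S₁ := S.filter (fun X => 0 < sideOf A B X)
  set S₂ := S.filter (fun X => sideOf A B X < 0)
  calc pm S₁ * pm S₂
      ≤ (matchingsThrough {A, B} s(A, B)).ncard * pm S₁ * pm S₂ :=
        Nat.mul_le_mul_right _ (Nat.le_mul_of_pos_left _ (one_le_ncard_matchingsThrough_pair hAB))
    _ ≤ (matchingsThrough ({A, B} ∪ S₁) s(A, B)).ncard * pm S₂ :=
        Nat.mul_le_mul_right _ (ncard_matchingsThrough_mul_pm_le _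
          (disjoint_convexHull_pair_filter_sideOf_pos S))
    _ ≤ (matchingsThrough ({A, B} ∪ S₁ ∪ S₂) s(A, B)).ncard :=
        ncard_matchingsThrough_mul_pm_le _ (disjoint_convexHull_pair_union_filter_sideOf_neg S)
    _ = (matchingsThrough S s(A, B)).ncard := by
        rw [pair_union_filter_sideOf hA hB hAB hline]

/-- If the line through two points `A, B` of `S` contains no
other point of `S`, then the number of non-crossing perfect matchings of `S`
containing the pair `{A, B}` is at least `pm S₁ * pm S₂`, where `S₁` and `S₂`
are the parts of `S` in the two open half-planes bounded by that line. -/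
theorem mul_pm_le_card_matchings_through_edge (S : Finset Pt)
    (hgp : GeneralPosition S)
    (A B : Pt) (hA : A ∈ S) (hB : B ∈ S) (hAB : A ≠ B)
    (hline : ∀ P ∈ S, P ≠ A → P ≠ B →
      P ∉ (affineSpan ℝ ({A, B} : Set Pt) : Set Pt)) :
    pm (S.filter (fun X => 0 < sideOf A B X)) *
      pm (S.filter (fun X => sideOf A B X < 0)) ≤
    Set.ncard {M : Finset (Sym2 Pt) | IsNCMatching S M ∧ s(A, B) ∈ M} :=
  mul_pm_le_card_matchings_through_edge_general S A B hA hB hAB hline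
end

section
/- Let S be a set of 2k points in the plane in general position. If S is not in convex position and it is not the case that k = 3 with the exceptional order type (exactly one point Q of S in the interior of the convex hull of S such that for every other point P of S, each of the two open half-planes bounded by the line through Q and P contains exactly 2 points of S), then the number of non-crossing perfect matchings of S is strictly greater than C_k: pm(S) > C_k. -/
open scoped Classical

/-!
Call a matching pierced at a hull vertex `A` if the line through `A` and its partner separates the
endpoints of another segment. The matchings that are not pierced at `A` split along the segment at
`A` into matchings of the two sides, and ordering the other points by angle around `A` shows by
Catalan's recurrence that there are at least `C_k` of them. So one matching pierced at one hull
vertex is enough.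

If `Q` is interior and the line `AQ` has an odd number of points on each side, remove the hull edge
that this line crosses beyond `Q`, match the rest along `AQ`, and put the edge back: it is pierced.

With two interior points `Q`, `r`, let `AB` be the hull edge crossed by the ray `rQ`. If the line
`Ar` has even sides, match `A` with `r`, and `B` with the interior point `q` of the triangle `ABr`
last in the angular order around `B`: no point is left of `Bq` on the side of `Ar` containing `B`,
so this extends to a matching, in which `Bq` pierces `Ar`.

With one interior point `Q`, double counting the triples `(Q, P, X)` by orientation shows that some
line `PQ` has odd sides when `k` is even. An odd `k ≥ 5` reduces to `k - 1` by removing a hull edge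
disjoint from a triangle around `Q`. For `k = 3`, only even sides means the exceptional order type.
-/

/-! ### Orientation -/

@[simp]
lemma sideOf_self_left_s10 (a b : Pt) : sideOf a b a = 0 := by simp [sideOf]

@[simp]
lemma sideOf_self_right_s10 (a b : Pt) : sideOf a b b = 0 := by simp [sideOf, mul_comm]

lemma sideOf_swap (a b x : Pt) : sideOf b a x = -sideOf a b x := by
  unfold sideOf
  ring

lemma sideOf_swap_right (a b x : Pt) : sideOf a x b = -sideOf a b x := by
  unfold sideOf
  ring

lemma sideOf_rotate (a b x : Pt) : sideOf b x a = sideOf a b x := by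
  unfold sideOf
  ring

lemma sideOf_swap_pos {a b x : Pt} : 0 < sideOf b a x ↔ sideOf a b x < 0 := by
  rw [sideOf_swap, neg_pos]

lemma sideOf_combo (a b p q : Pt) {s t : ℝ} (hst : s + t = 1) :
    sideOf a b (s • p + t • q) = s * sideOf a b p + t * sideOf a b q := by
  obtain rfl : s = 1 - t := by linarith
  simp only [sideOf, Prod.fst_add, Prod.snd_add, Prod.smul_fst, Prod.smul_snd, smul_eq_mul]
  ring

lemma convex_setOf_lt_sideOf (a b : Pt) (c : ℝ) : Convex ℝ {x | c < sideOf a b x} := by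
  intro p hp q hq s t hs ht hst
  rw [Set.mem_ofPred_eq, sideOf_combo a b p q hst]
  exact convex_Ioi c hp hq hs ht hst

lemma convex_setOf_sideOf_le (a b : Pt) (c : ℝ) : Convex ℝ {x | sideOf a b x ≤ c} := by
  intro p hp q hq s t hs ht hst
  rw [Set.mem_ofPred_eq, sideOf_combo a b p q hst]
  exact convex_Iic c hp hq hs ht hst

/-- Cramer's rule for three vectors in the plane. -/
lemma sideOf_smul_sub_add_eq_zero (a b c d : Pt) :
    sideOf a c d • (b - a) + sideOf a d b • (c - a) + sideOf a b c • (d - a) = 0 := by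
  ext <;> simp [sideOf] <;> ring

lemma GeneralPosition.mono {S T : Finset Pt} (hS : GeneralPosition S) (hTS : T ⊆ S) :
    GeneralPosition T :=
  fun p hp q hq r hr => hS p (hTS hp) q (hTS hq) r (hTS hr)

lemma collinear_of_sideOf_eq_zero_s10 {p q r : Pt} (hpq : p ≠ q) (h : sideOf p q r = 0) :
    Collinear ℝ {p, q, r} := by
  have hnorm : (q.1 - p.1) ^ 2 + (q.2 - p.2) ^ 2 ≠ 0 := by
    contrapose! hpq
    ext <;> nlinarith [sq_nonneg (q.1 - p.1), sq_nonneg (q.2 - p.2)]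
  have hr : r = (((q.1 - p.1) * (r.1 - p.1) + (q.2 - p.2) * (r.2 - p.2)) /
      ((q.1 - p.1) ^ 2 + (q.2 - p.2) ^ 2)) • (q - p) + p := by
    unfold sideOf at h
    ext <;> simp <;> field_simp <;> grind
  rw [collinear_iff_of_mem (p₀ := p) (by simp)]
  refine ⟨q - p, ?_⟩
  rintro x (rfl | rfl | rfl)
  · exact ⟨0, by simp⟩
  · exact ⟨1, by simp⟩
  · exact ⟨_, hr⟩

lemma GeneralPosition.sideOf_ne_zero {S : Finset Pt} (hS : GeneralPosition S) {p q r : Pt}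
    (hp : p ∈ S) (hq : q ∈ S) (hr : r ∈ S) (hpq : p ≠ q) (hpr : p ≠ r) (hqr : q ≠ r) :
    sideOf p q r ≠ 0 :=
  fun h => hS p hp q hq r hr hpq hpr hqr (collinear_of_sideOf_eq_zero_s10 hpq h)

/-! ### Matchings -/

lemma isNCMatching_empty : IsNCMatching ∅ ∅ := by simp [IsNCMatching]

lemma isNCMatching_pair_s10 {a b : Pt} (hab : a ≠ b) : IsNCMatching {a, b} {s(a, b)} := by
  refine ⟨by simpa using hab, by simp, fun p hp => ?_, ?_⟩
  · exact ⟨s(a, b), by simpa using hp, by simp⟩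
  · intro e he f hf hef
    exact absurd ((Finset.mem_singleton.1 he).trans (Finset.mem_singleton.1 hf).symm) hef

lemma seg_subset_of_convex {K : Set Pt} (hK : Convex ℝ K) {e : Sym2 Pt} (he : ∀ p ∈ e, p ∈ K) :
    seg e ⊆ K := by
  induction e with
  | _ p q => exact hK.segment_subset (he p (Sym2.mem_mk_left p q)) (he q (Sym2.mem_mk_right p q))

namespace IsNCMatching

variable {S S₁ S₂ : Finset Pt} {M M₁ M₂ N₁ N₂ : Finset (Sym2 Pt)}

lemma mem_of_mem (h : IsNCMatching S M) {e : Sym2 Pt} (he : e ∈ M) {p : Pt} (hp : p ∈ e) : p ∈ S :=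
  h.2.1 e he p hp

lemma partner_unique (h : IsNCMatching S M) {p q r : Pt} (hq : s(p, q) ∈ M) (hr : s(p, r) ∈ M) :
    q = r :=
  Sym2.congr_right.1 <| (h.2.2.1 p (h.mem_of_mem hq (Sym2.mem_mk_left p q))).unique
    ⟨hq, Sym2.mem_mk_left p q⟩ ⟨hr, Sym2.mem_mk_left p r⟩

lemma union_s10 (h₁ : IsNCMatching S₁ M₁) (h₂ : IsNCMatching S₂ M₂) (hS : Disjoint S₁ S₂)
    (hM : ∀ e ∈ M₁, ∀ f ∈ M₂, Disjoint (seg e) (seg f)) : IsNCMatching (S₁ ∪ S₂) (M₁ ∪ M₂) := by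
  have hS' := Finset.disjoint_left.1 hS
  refine ⟨?_, ?_, ?_, ?_⟩
  · exact fun e he => (Finset.mem_union.1 he).elim (h₁.1 e) (h₂.1 e)
  · exact fun e he p hp => Finset.mem_union.2 <|
      (Finset.mem_union.1 he).imp (h₁.mem_of_mem · hp) (h₂.mem_of_mem · hp)
  · intro p hp
    rcases Finset.mem_union.1 hp with hp | hp
    · obtain ⟨e, ⟨he, hpe⟩, huniq⟩ := h₁.2.2.1 p hp
      refine ⟨e, ⟨Finset.mem_union_left _ he, hpe⟩, fun f ⟨hf, hpf⟩ => huniq f ⟨?_, hpf⟩⟩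
      exact (Finset.mem_union.1 hf).resolve_right fun hf => hS' hp (h₂.mem_of_mem hf hpf)
    · obtain ⟨e, ⟨he, hpe⟩, huniq⟩ := h₂.2.2.1 p hp
      refine ⟨e, ⟨Finset.mem_union_right _ he, hpe⟩, fun f ⟨hf, hpf⟩ => huniq f ⟨?_, hpf⟩⟩
      exact (Finset.mem_union.1 hf).resolve_left fun hf => hS' (h₁.mem_of_mem hf hpf) hp
  · intro e he f hf hef
    rcases Finset.mem_union.1 he with he | he <;> rcases Finset.mem_union.1 hf with hf | hf
    · exact h₁.2.2.2 e he f hf hef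
    · exact hM e he f hf
    · exact (hM f hf e he).symm
    · exact h₂.2.2.2 e he f hf hef

lemma union_of_sideOf (h₁ : IsNCMatching S₁ M₁) (h₂ : IsNCMatching S₂ M₂) {a b : Pt}
    (hS₁ : ∀ x ∈ S₁, 0 < sideOf a b x) (hS₂ : ∀ x ∈ S₂, sideOf a b x ≤ 0) :
    IsNCMatching (S₁ ∪ S₂) (M₁ ∪ M₂) := by
  refine h₁.union_s10 h₂ ?_ fun e he f hf => ?_
  · exact Finset.disjoint_left.2 fun x hx₁ hx₂ => (hS₁ x hx₁).not_ge (hS₂ x hx₂)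
  · have he := seg_subset_of_convex (convex_setOf_lt_sideOf a b 0)
      fun p hp => hS₁ p (h₁.mem_of_mem he hp)
    have hf := seg_subset_of_convex (convex_setOf_sideOf_le a b 0)
      fun p hp => hS₂ p (h₂.mem_of_mem hf hp)
    exact Set.disjoint_left.2 fun x hxe hxf =>
      lt_irrefl (0 : ℝ) (lt_of_lt_of_le (he hxe) (hf hxf))

lemma subset_of_union_subset (h₁ : IsNCMatching S₁ M₁) (h₂ : IsNCMatching S₂ N₂)
    (hS : Disjoint S₁ S₂) (h : M₁ ⊆ N₁ ∪ N₂) : M₁ ⊆ N₁ := by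
  intro e he
  refine (Finset.mem_union.1 (h he)).resolve_right fun he' => ?_
  have hp := e.out_fst_mem
  exact Finset.disjoint_left.1 hS (h₁.mem_of_mem he hp) (h₂.mem_of_mem he' hp)

lemma union_inj (hM₁ : IsNCMatching S₁ M₁) (hN₁ : IsNCMatching S₁ N₁) (hM₂ : IsNCMatching S₂ M₂)
    (hN₂ : IsNCMatching S₂ N₂) (hS : Disjoint S₁ S₂) (h : M₁ ∪ M₂ = N₁ ∪ N₂) :
    M₁ = N₁ ∧ M₂ = N₂ := by
  have hM : M₁ ⊆ N₁ ∪ N₂ ∧ M₂ ⊆ N₂ ∪ N₁ := by grind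
  have hN : N₁ ⊆ M₁ ∪ M₂ ∧ N₂ ⊆ M₂ ∪ M₁ := by grind
  exact ⟨(hM₁.subset_of_union_subset hN₂ hS hM.1).antisymm
      (hN₁.subset_of_union_subset hM₂ hS hN.1),
    (hM₂.subset_of_union_subset hN₁ hS.symm hM.2).antisymm
      (hN₂.subset_of_union_subset hM₁ hS.symm hN.2)⟩

end IsNCMatching

/-- The non-crossing perfect matchings of `S` as a finset, for counting. -/
noncomputable def ncMatchings (S : Finset Pt) : Finset (Finset (Sym2 Pt)) :=
  S.sym2.powerset.filter (IsNCMatching S)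

lemma mem_ncMatchings {S : Finset Pt} {M : Finset (Sym2 Pt)} :
    M ∈ ncMatchings S ↔ IsNCMatching S M := by
  refine Finset.mem_filter.trans (and_iff_right_of_imp fun h => ?_)
  exact Finset.mem_powerset.2 fun e he => Finset.mem_sym2_iff.2 fun p => h.mem_of_mem he

lemma card_ncMatchings (S : Finset Pt) : (ncMatchings S).card = pm S := by
  rw [pm, ← Set.ncard_coe_finset]
  congr 1
  ext M
  exact mem_ncMatchings

/-! ### Splitting along a line -/

/-- The points of `S` strictly to the left of the directed line from `A` to `B`. The points to its
right are `leftOf B A S`. -/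
noncomputable def leftOf (A B : Pt) (S : Finset Pt) : Finset Pt :=
  S.filter fun x => 0 < sideOf A B x

section LeftOf

variable {S : Finset Pt} {A B : Pt}

lemma mem_leftOf {x : Pt} : x ∈ leftOf A B S ↔ x ∈ S ∧ 0 < sideOf A B x :=
  Finset.mem_filter

lemma leftOf_subset (A B : Pt) (S : Finset Pt) : leftOf A B S ⊆ S :=
  Finset.filter_subset _ _

lemma disjoint_leftOf_swap (A B : Pt) (S : Finset Pt) :
    Disjoint (leftOf A B S) (leftOf B A S) := by
  refine Finset.disjoint_left.2 fun x hx hx' => ?_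
  exact (mem_leftOf.1 hx).2.not_gt (sideOf_swap_pos.1 (mem_leftOf.1 hx').2)

lemma left_notMem_leftOf (A B : Pt) (S : Finset Pt) : A ∉ leftOf A B S := by
  simp [mem_leftOf]

lemma right_notMem_leftOf (A B : Pt) (S : Finset Pt) : B ∉ leftOf A B S := by
  simp [mem_leftOf]

lemma disjoint_leftOf_pair (A B : Pt) (S : Finset Pt) :
    Disjoint (leftOf A B S) (leftOf B A S ∪ {A, B}) := by
  simp [disjoint_leftOf_swap, left_notMem_leftOf, right_notMem_leftOf]

lemma leftOf_union_leftOf_swap (hS : GeneralPosition S) (hA : A ∈ S) (hB : B ∈ S) (hAB : A ≠ B) :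
    leftOf A B S ∪ (leftOf B A S ∪ {A, B}) = S := by
  ext x
  have hside := hS.sideOf_ne_zero hA hB (r := x)
  simp only [Finset.mem_union, mem_leftOf, sideOf_swap_pos (a := A), Finset.mem_insert,
    Finset.mem_singleton]
  grind

lemma card_leftOf_add_card_leftOf_swap (hS : GeneralPosition S) (hA : A ∈ S) (hB : B ∈ S)
    (hAB : A ≠ B) : (leftOf A B S).card + (leftOf B A S).card + 2 = S.card := by
  have hpair : Disjoint (leftOf B A S) {A, B} := by
    simp [left_notMem_leftOf, right_notMem_leftOf]
  conv_rhs => rw [← leftOf_union_leftOf_swap hS hA hB hAB]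
  rw [Finset.card_union_of_disjoint (disjoint_leftOf_pair A B S),
    Finset.card_union_of_disjoint hpair, Finset.card_pair hAB, add_assoc]

lemma sideOf_nonpos_of_mem_leftOf_union_pair {x : Pt} (hx : x ∈ leftOf B A S ∪ {A, B}) :
    sideOf A B x ≤ 0 := by
  simp only [Finset.mem_union, Finset.mem_insert, Finset.mem_singleton] at hx
  rcases hx with hx | rfl | rfl
  · exact (sideOf_swap_pos.1 (mem_leftOf.1 hx).2).le
  · exact (sideOf_self_left_s10 _ _).le
  · exact (sideOf_self_right_s10 _ _).le

lemma isNCMatching_leftOf_union_pair (hAB : A ≠ B) {N : Finset (Sym2 Pt)}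
    (hN : IsNCMatching (leftOf B A S) N) :
    IsNCMatching (leftOf B A S ∪ {A, B}) (N ∪ {s(A, B)}) :=
  hN.union_of_sideOf (isNCMatching_pair_s10 hAB) (fun _ hx => (mem_leftOf.1 hx).2) (by simp)

lemma isNCMatching_split (hS : GeneralPosition S) (hA : A ∈ S) (hB : B ∈ S) (hAB : A ≠ B)
    {M N : Finset (Sym2 Pt)} (hM : IsNCMatching (leftOf A B S) M)
    (hN : IsNCMatching (leftOf B A S) N) : IsNCMatching S (M ∪ (N ∪ {s(A, B)})) := by
  rw [← leftOf_union_leftOf_swap hS hA hB hAB]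
  exact hM.union_of_sideOf (isNCMatching_leftOf_union_pair hAB hN)
    (fun x hx => (mem_leftOf.1 hx).2) fun x hx => sideOf_nonpos_of_mem_leftOf_union_pair hx

end LeftOf

/-! ### Hull vertices -/

/-- The vertices of the convex hull of `S`. -/
noncomputable def hullVertices (S : Finset Pt) : Finset Pt :=
  S.filter fun p => p ∉ convexHull ℝ (↑(S.erase p) : Set Pt)

section HullVertices

variable {S : Finset Pt} {A b c d p : Pt}

lemma mem_hullVertices :
    p ∈ hullVertices S ↔ p ∈ S ∧ p ∉ convexHull ℝ (↑(S.erase p) : Set Pt) :=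
  Finset.mem_filter

lemma hullVertices_subset (S : Finset Pt) : hullVertices S ⊆ S :=
  Finset.filter_subset _ _

lemma mem_convexHull_erase_of_notMem_hullVertices (hp : p ∈ S) (hpv : p ∉ hullVertices S) :
    p ∈ convexHull ℝ (↑(S.erase p) : Set Pt) := by
  by_contra h
  exact hpv (mem_hullVertices.2 ⟨hp, h⟩)

lemma mem_hullVertices_of_convex {K : Set Pt} (hK : Convex ℝ K) (hp : p ∈ S) (hpK : p ∉ K)
    (h : ∀ x ∈ S, x ≠ p → x ∈ K) : p ∈ hullVertices S := by
  refine mem_hullVertices.2 ⟨hp, fun hmem => hpK (convexHull_min ?_ hK hmem)⟩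
  exact fun x hx => h x (Finset.mem_of_mem_erase hx) (Finset.ne_of_mem_erase hx)

lemma hullVertices_nonempty (hS : S.Nonempty) : (hullVertices S).Nonempty := by
  obtain ⟨p, hp⟩ := (S.finite_toSet.isCompact_convexHull ℝ).extremePoints_nonempty
    (hS.to_set.convexHull (𝕜 := ℝ))
  have hconv := (convex_convexHull ℝ (S : Set Pt)
    ).mem_extremePoints_iff_mem_sdiff_convexHull_sdiff.1 hp
  refine ⟨p, mem_hullVertices.2 ⟨extremePoints_convexHull_subset hp, fun h => hconv.2 ?_⟩⟩
  rw [Finset.coe_erase] at h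
  exact convexHull_mono (Set.sdiff_subset_sdiff_left (subset_convexHull ℝ _)) h

lemma exists_forall_lt_of_mem_hullVertices (hA : A ∈ hullVertices S) :
    ∃ f : Pt →L[ℝ] ℝ, ∀ x ∈ S, x ≠ A → f A < f x := by
  obtain ⟨f, u, hfA, hf⟩ := geometric_hahn_banach_point_closed (convex_convexHull ℝ _)
    ((S.erase A).finite_toSet.isClosed_convexHull ℝ) (mem_hullVertices.1 hA).2
  exact ⟨f, fun x hx hxA => hfA.trans <|
    hf x (subset_convexHull ℝ _ (Finset.mem_erase.2 ⟨hxA, hx⟩))⟩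

lemma sideOf_pos_trans (hA : A ∈ hullVertices S) (hb : b ∈ S) (hc : c ∈ S) (hd : d ∈ S)
    (hbc : 0 < sideOf A b c) (hcd : 0 < sideOf A c d) : 0 < sideOf A b d := by
  obtain ⟨f, hf⟩ := exists_forall_lt_of_mem_hullVertices hA
  have hfb := hf b hb (by rintro rfl; simp [sideOf] at hbc)
  have hfc := hf c hc (by rintro rfl; simp at hbc)
  have hfd := hf d hd (by rintro rfl; simp at hcd)
  have key := congrArg f (sideOf_smul_sub_add_eq_zero A b c d)
  simp only [map_add, map_smul, map_sub, smul_eq_mul, map_zero, sideOf_swap_right A b d] at key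
  have := mul_pos hcd (sub_pos.2 hfb)
  have := mul_pos hbc (sub_pos.2 hfd)
  exact pos_of_mul_pos_left (a := sideOf A b d) (b := f c - f A) (by linarith) (by linarith)

/- From a hull vertex `A`, the other points are linearly ordered by angle, and the position of `b`
in this order is `(leftOf b A S).card`. -/

lemma mem_leftOf_rotate {x : Pt} : x ∈ leftOf b A S ↔ x ∈ S ∧ 0 < sideOf A x b := by
  rw [mem_leftOf, sideOf_rotate, sideOf_rotate]

lemma card_leftOf_lt_of_sideOf_pos (hA : A ∈ hullVertices S) (hb : b ∈ S) (hc : c ∈ S)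
    (hbc : 0 < sideOf A b c) : (leftOf b A S).card < (leftOf c A S).card := by
  have hsub : leftOf b A S ⊆ leftOf c A S := fun x hx => by
    obtain ⟨hxS, hxb⟩ := mem_leftOf_rotate.1 hx
    exact mem_leftOf_rotate.2 ⟨hxS, sideOf_pos_trans hA hxS hb hc hxb hbc⟩
  exact Finset.card_lt_card <| (Finset.ssubset_iff_of_subset hsub).2
    ⟨b, mem_leftOf_rotate.2 ⟨hb, hbc⟩, left_notMem_leftOf b A S⟩

lemma injOn_card_leftOf (hS : GeneralPosition S) (hA : A ∈ hullVertices S) :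
    Set.InjOn (fun b => (leftOf b A S).card) (S.erase A : Finset Pt) := by
  intro b hb c hc h
  by_contra hbc
  obtain ⟨hbA, hb⟩ := Finset.mem_erase.1 hb
  obtain ⟨hcA, hc⟩ := Finset.mem_erase.1 hc
  rcases (hS.sideOf_ne_zero (hullVertices_subset S hA) hb hc hbA.symm hcA.symm hbc).lt_or_gt
    with hneg | hpos
  · refine (card_leftOf_lt_of_sideOf_pos hA hc hb ?_).ne' h
    rwa [sideOf_swap_right A b c, neg_pos]
  · exact (card_leftOf_lt_of_sideOf_pos hA hb hc hpos).ne h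

lemma exists_card_leftOf_eq (hS : GeneralPosition S) (hA : A ∈ hullVertices S) {i : ℕ}
    (hi : i + 1 < S.card) : ∃ b ∈ S.erase A, (leftOf b A S).card = i := by
  have hAS := hullVertices_subset S hA
  have hmaps : Set.MapsTo (fun b => (leftOf b A S).card) (S.erase A : Finset Pt)
      (Finset.range (S.card - 1) : Finset ℕ) := by
    intro b hb
    obtain ⟨hbA, hb⟩ := Finset.mem_erase.1 hb
    have := card_leftOf_add_card_leftOf_swap hS hb hAS hbA
    simp only [Finset.coe_range, Set.mem_Iio]
    omega
  have hsurj := Finset.surjOn_of_injOn_of_card_le _ hmaps (injOn_card_leftOf hS hA)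
    (by rw [Finset.card_range, Finset.card_erase_of_mem hAS])
  exact hsurj (Finset.mem_coe.2 (Finset.mem_range.2 (by omega)))

lemma convex_insert_setOf_sideOf_neg {a b P : Pt} (hP : sideOf a b P = 0) :
    Convex ℝ (insert P {x | sideOf a b x < 0}) := by
  rw [convex_iff_forall_pos]
  rintro p (rfl | hp) q (rfl | hq) s t hs ht hst
  · exact .inl (Convex.combo_self hst _)
  all_goals
    refine .inr ?_
    simp only [Set.mem_ofPred_eq, sideOf_combo _ _ _ _ hst] at *
    nlinarith

lemma mem_hullVertices_of_sideOf_neg {a b P Q : Pt} (hQ : Q ∈ S) (hPQ : P ≠ Q)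
    (hQ₀ : sideOf a b Q = 0) (hP₀ : sideOf a b P = 0)
    (h : ∀ x ∈ S, x ≠ Q → x ≠ P → sideOf a b x < 0) : Q ∈ hullVertices S := by
  refine mem_hullVertices_of_convex (convex_insert_setOf_sideOf_neg hP₀) hQ ?_ fun x hx hxQ => ?_
  · simp [hPQ.symm, hQ₀]
  · exact or_iff_not_imp_left.2 (h x hx hxQ)

end HullVertices

/-! ### Hull edges -/

/-- `XY` is an edge of the convex hull of `S`, oriented so that `S` lies to its left. -/
structure IsHullEdge (S : Finset Pt) (X Y : Pt) : Prop where
  left_mem : X ∈ S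
  right_mem : Y ∈ S
  ne : X ≠ Y
  sideOf_pos : ∀ x ∈ S, x ≠ X → x ≠ Y → 0 < sideOf X Y x

section HullEdge

variable {S : Finset Pt} {P Q X Y Z : Pt}

lemma isHullEdge_of_leftOf_eq_empty (hS : GeneralPosition S) (hX : X ∈ S) (hY : Y ∈ S)
    (hXY : X ≠ Y) (h : leftOf Y X S = ∅) : IsHullEdge S X Y := by
  refine ⟨hX, hY, hXY, fun x hx hxX hxY => ?_⟩
  have hmem : x ∈ leftOf X Y S ∪ (leftOf Y X S ∪ {X, Y}) := by
    rwa [leftOf_union_leftOf_swap hS hX hY hXY]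
  have hleft : x ∈ leftOf X Y S := by simpa [h, hxX, hxY] using hmem
  exact (mem_leftOf.1 hleft).2

lemma IsHullEdge.mem_hullVertices (h : IsHullEdge S X Y) :
    X ∈ hullVertices S ∧ Y ∈ hullVertices S := by
  have hneg : ∀ x ∈ S, x ≠ X → x ≠ Y → sideOf Y X x < 0 := fun x hx hxX hxY =>
    sideOf_swap_pos.1 (h.sideOf_pos x hx hxX hxY)
  exact ⟨mem_hullVertices_of_sideOf_neg h.left_mem h.ne.symm (by simp) (by simp) hneg,
    mem_hullVertices_of_sideOf_neg h.right_mem h.ne (by simp) (by simp)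
      fun x hx hxY hxX => hneg x hx hxX hxY⟩

lemma IsHullEdge.eq_of_eq_right (h : IsHullEdge S X Z) (h' : IsHullEdge S Y Z) : X = Y := by
  by_contra hXY
  have hY := h.sideOf_pos Y h'.left_mem (Ne.symm hXY) h'.ne
  have hX := h'.sideOf_pos X h.left_mem hXY h.ne
  rw [← sideOf_rotate, sideOf_swap] at hX
  linarith [sideOf_rotate X Z Y, sideOf_swap X Z Y]

lemma exists_isHullEdge_of_mem_hullVertices (hS : GeneralPosition S) (hX : X ∈ hullVertices S)
    (hcard : 2 ≤ S.card) : ∃ Y, IsHullEdge S X Y := by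
  obtain ⟨Y, hY, hYX⟩ := exists_card_leftOf_eq hS hX (i := 0) hcard
  obtain ⟨hne, hY⟩ := Finset.mem_erase.1 hY
  exact ⟨Y, isHullEdge_of_leftOf_eq_empty hS (hullVertices_subset S hX) hY hne.symm
    (Finset.card_eq_zero.1 hYX)⟩

lemma leftOf_nonempty_of_notMem_hullVertices (hS : GeneralPosition S) (hQ : Q ∈ S)
    (hQv : Q ∉ hullVertices S) (hP : P ∈ S) (hPQ : P ≠ Q) :
    (leftOf P Q S).Nonempty ∧ (leftOf Q P S).Nonempty := by
  constructor <;> by_contra! hempty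
  · exact hQv (isHullEdge_of_leftOf_eq_empty hS hQ hP hPQ.symm hempty).mem_hullVertices.1
  · exact hQv (isHullEdge_of_leftOf_eq_empty hS hP hQ hPQ hempty).mem_hullVertices.2

/- Send every hull vertex to its successor along the boundary; at most `T.card` vertices lie in `T`
and at most `T.card` have their successor in `T`. -/
lemma exists_isHullEdge_notMem (hS : GeneralPosition S) (hcard : 2 ≤ S.card) {T : Finset Pt}
    (hT : 2 * T.card < (hullVertices S).card) : ∃ X Y, IsHullEdge S X Y ∧ X ∉ T ∧ Y ∉ T := by
  choose! succ hsucc using fun X (hX : X ∈ hullVertices S) =>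
    exists_isHullEdge_of_mem_hullVertices hS hX hcard
  by_contra! hcover
  have hinT : ((hullVertices S).filter (· ∈ T)).card ≤ T.card :=
    Finset.card_le_card fun X hX => (Finset.mem_filter.1 hX).2
  have hsuccT : ((hullVertices S).filter (succ · ∈ T)).card ≤ T.card := by
    refine Finset.card_le_card_of_injOn succ (fun X hX => (Finset.mem_filter.1 hX).2) ?_
    intro X hX Y hY hXY
    have hX := hsucc X (Finset.mem_filter.1 hX).1
    exact (hXY ▸ hX).eq_of_eq_right (hsucc Y (Finset.mem_filter.1 hY).1)
  have hunion : hullVertices S ⊆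
      (hullVertices S).filter (· ∈ T) ∪ (hullVertices S).filter (succ · ∈ T) := by
    intro X hX
    have := hcover X (succ X) (hsucc X hX)
    grind
  have := (Finset.card_le_card hunion).trans (Finset.card_union_le _ _)
  omega

lemma IsHullEdge.isNCMatching (h : IsHullEdge S X Y) {M : Finset (Sym2 Pt)}
    (hM : IsNCMatching ((S.erase X).erase Y) M) : IsNCMatching S (M ∪ {s(X, Y)}) := by
  have hS : (S.erase X).erase Y ∪ {X, Y} = S := by
    ext x
    have := h.left_mem
    have := h.right_mem
    grind
  rw [← hS]
  refine hM.union_of_sideOf (a := X) (b := Y) (isNCMatching_pair_s10 h.ne) (fun x hx => ?_) (by simp)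
  obtain ⟨hxY, hxX, hxS⟩ : x ≠ Y ∧ x ≠ X ∧ x ∈ S := by simpa using hx
  exact h.sideOf_pos x hxS hxX hxY

/- Among the segments from the right to the left of the line `ab`, take the one crossing that line
furthest in the direction of `b`. -/
lemma exists_sideOf_nonneg_of_leftOf_nonempty {a b : Pt} (hL : (leftOf a b S).Nonempty)
    (hR : (leftOf b a S).Nonempty) :
    ∃ D ∈ leftOf b a S, ∃ C ∈ leftOf a b S, ∀ x ∈ leftOf a b S ∪ leftOf b a S,
      0 ≤ sideOf D C x := by
  obtain ⟨⟨D, C⟩, hDC, hmax⟩ := Finset.exists_max_image (leftOf b a S ×ˢ leftOf a b S)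
    (fun p => sideOf p.1 p.2 a / (sideOf a b p.2 - sideOf a b p.1)) (hR.product hL)
  obtain ⟨hD, hC⟩ := Finset.mem_product.1 hDC
  have hleft : ∀ {x}, x ∈ leftOf a b S → 0 < sideOf a b x := fun hx => (mem_leftOf.1 hx).2
  have hright : ∀ {x}, x ∈ leftOf b a S → sideOf a b x < 0 := fun hx =>
    sideOf_swap_pos.1 (mem_leftOf.1 hx).2
  have hCpos := hleft hC
  have hDneg := hright hD
  refine ⟨D, hD, C, hC, fun x hx => ?_⟩
  rcases Finset.mem_union.1 hx with hx | hx
  · have hxpos := hleft hx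
    have hle := hmax (D, x) (Finset.mem_product.2 ⟨hD, hx⟩)
    rw [div_le_div_iff₀ (by linarith) (by linarith)] at hle
    have hdet : sideOf D C a * (sideOf a b x - sideOf a b D) -
        sideOf D x a * (sideOf a b C - sideOf a b D) = -sideOf a b D * sideOf D C x := by
      unfold sideOf
      ring
    exact nonneg_of_mul_nonneg_right (by linarith) (neg_pos.2 hDneg)
  · have hxneg := hright hx
    have hle := hmax (x, C) (Finset.mem_product.2 ⟨hx, hC⟩)
    rw [div_le_div_iff₀ (by linarith) (by linarith)] at hle
    have hdet : sideOf D C a * (sideOf a b C - sideOf a b x) -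
        sideOf x C a * (sideOf a b C - sideOf a b D) = sideOf a b C * sideOf D C x := by
      unfold sideOf
      ring
    exact nonneg_of_mul_nonneg_right (by linarith) hCpos

lemma exists_isHullEdge_crossing (hS : GeneralPosition S) {a b : Pt} (ha : a ∈ S) (hb : b ∈ S)
    (hbv : b ∉ hullVertices S) (hab : a ≠ b) :
    ∃ D C, IsHullEdge S D C ∧ sideOf a b D < 0 ∧ 0 < sideOf a b C := by
  have hne := leftOf_nonempty_of_notMem_hullVertices hS hb hbv ha hab
  obtain ⟨D, hD, C, hC, hDC⟩ := exists_sideOf_nonneg_of_leftOf_nonempty hne.1 hne.2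
  obtain ⟨hDS, hDneg⟩ := mem_leftOf.1 hD
  obtain ⟨hCS, hCpos⟩ := mem_leftOf.1 hC
  rw [sideOf_swap_pos] at hDneg
  have hDCne : D ≠ C := by rintro rfl; linarith
  have hcase : ∀ x ∈ S, 0 ≤ sideOf D C x ∨ x = a ∨ x = b := by
    intro x hx
    rw [← leftOf_union_leftOf_swap hS ha hb hab, ← Finset.union_assoc, Finset.mem_union] at hx
    exact hx.imp (hDC x) (by simp)
  have hsum : sideOf D C a = sideOf D C b + (sideOf a b C - sideOf a b D) := by
    unfold sideOf
    ring
  have hbpos : 0 ≤ sideOf D C b := by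
    by_contra! hbneg
    refine hbv (mem_hullVertices_of_convex (convex_setOf_lt_sideOf D C (sideOf D C b)) hb
      (by simp) fun x hx hxb => ?_)
    change sideOf D C b < sideOf D C x
    rcases hcase x hx with h | rfl | rfl
    · linarith
    · linarith
    · exact absurd rfl hxb
  refine ⟨D, C, ⟨hDS, hCS, hDCne, fun x hx hxD hxC => ?_⟩, hDneg, hCpos⟩
  refine lt_of_le_of_ne ?_ (hS.sideOf_ne_zero hDS hCS hx hDCne hxD.symm hxC.symm).symm
  rcases hcase x hx with h | rfl | rfl
  · exact h
  · linarith
  · exact hbpos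

end HullEdge

/-! ### Interior points -/

section Interior

variable {S : Finset Pt} {P Q : Pt}

lemma notMem_interior_of_mem_hullVertices (hQ : Q ∈ hullVertices S) (hP : P ∈ S) (hPQ : P ≠ Q) :
    Q ∉ interior (convexHull ℝ (S : Set Pt)) := by
  intro hint
  obtain ⟨f, hf⟩ := exists_forall_lt_of_mem_hullVertices hQ
  have hhull : convexHull ℝ (S : Set Pt) ⊆ {x | f Q ≤ f x} := by
    refine convexHull_min (fun x hx => ?_) (convex_halfSpace_ge f.toLinearMap.isLinear (f Q))
    by_cases hxQ : x = Q
    · simp [hxQ]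
    · exact (hf x hx hxQ).le
  have hmin : IsLocalMin f Q :=
    Filter.mem_of_superset (mem_interior_iff_mem_nhds.1 hint) hhull
  have hzero : f = 0 := hmin.hasFDerivAt_eq_zero f.hasFDerivAt
  simpa [hzero] using hf P hP hPQ

lemma three_le_card_of_mem_convexHull (hS : GeneralPosition S) (hQ : Q ∈ S) {T : Finset Pt}
    (hT : T ⊆ S.erase Q) (hQT : Q ∈ convexHull ℝ (T : Set Pt)) : 3 ≤ T.card := by
  by_contra! hcard
  interval_cases h : T.card
  · simp [Finset.card_eq_zero.1 h] at hQT
  · obtain ⟨a, rfl⟩ := Finset.card_eq_one.1 h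
    obtain rfl : Q = a := by simpa using hQT
    simp at hT
  · obtain ⟨a, b, hab, rfl⟩ := Finset.card_eq_two.1 h
    obtain ⟨haQ, ha⟩ := Finset.mem_erase.1 (hT (show a ∈ {a, b} by simp))
    obtain ⟨hbQ, hb⟩ := Finset.mem_erase.1 (hT (show b ∈ {a, b} by simp))
    rw [Finset.coe_pair] at hQT
    exact hS Q hQ a ha b hb haQ.symm hbQ.symm hab
      (collinear_insert_of_mem_affineSpan_pair (convexHull_subset_affineSpan _ hQT))

/- By Carathéodory, `Q` is a strictly positive combination of affinely independent points of `S`. -/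
lemma mem_interior_of_notMem_hullVertices (hS : GeneralPosition S) (hQ : Q ∈ S)
    (hQv : Q ∉ hullVertices S) : Q ∈ interior (convexHull ℝ (S : Set Pt)) := by
  obtain ⟨ι, _, z, w, hz, hind, hw, hsum, hQz⟩ := eq_pos_convex_span_of_mem_convexHull
    (mem_convexHull_erase_of_notMem_hullVertices hQ hQv)
  have hcard : Fintype.card ι = Module.finrank ℝ Pt + 1 := by
    refine le_antisymm
      (hind.card_le_finrank_succ.trans (Nat.succ_le_succ (Submodule.finrank_le _))) ?_
    have himage : 3 ≤ (Finset.univ.image z).card := by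
      refine three_le_card_of_mem_convexHull hS hQ ?_ ?_
      · simpa [← Finset.coe_subset] using hz
      · rw [Finset.coe_image, Finset.coe_univ, Set.image_univ, ← hQz]
        exact (convex_convexHull ℝ _).sum_mem (fun i _ => (hw i).le) hsum
          fun i _ => subset_convexHull ℝ _ ⟨i, rfl⟩
    simpa using himage.trans Finset.card_image_le
  let basis : AffineBasis ι ℝ Pt :=
    ⟨z, hind, hind.affineSpan_eq_top_iff_card_eq_finrank_add_one.2 hcard⟩
  have hQint : Q ∈ interior (convexHull ℝ (Set.range basis)) := by
    rw [basis.interior_convexHull]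
    intro i
    have : Q = Finset.univ.affineCombination ℝ basis w := by
      rw [Finset.affineCombination_eq_linear_combination _ _ _ hsum]
      exact hQz.symm
    rw [this, basis.coord_apply_combination_of_mem (Finset.mem_univ i) hsum]
    exact hw i
  exact interior_mono (convexHull_mono (hz.trans (by simp))) hQint

end Interior

/-! ### Counting unpierced matchings -/

/-- `M` matches `A` to a point `Q` such that the line `AQ` separates the endpoints of another
segment of `M`. -/
def PiercedAt (A : Pt) (M : Finset (Sym2 Pt)) : Prop :=
  ∃ Q C D, s(A, Q) ∈ M ∧ s(C, D) ∈ M ∧ 0 < sideOf A Q C ∧ sideOf A Q D < 0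

/-- The matchings of `S` made of the segment `AB` and a matching on each side of the line `AB`. -/
noncomputable def splitMatchings (A B : Pt) (S : Finset Pt) : Finset (Finset (Sym2 Pt)) :=
  (ncMatchings (leftOf A B S) ×ˢ ncMatchings (leftOf B A S)).image
    fun p => p.1 ∪ (p.2 ∪ {s(A, B)})

section Counting

variable {S : Finset Pt} {A B : Pt} {M : Finset (Sym2 Pt)}

lemma mem_splitMatchings :
    M ∈ splitMatchings A B S ↔ ∃ M₁ M₂, IsNCMatching (leftOf A B S) M₁ ∧
      IsNCMatching (leftOf B A S) M₂ ∧ M = M₁ ∪ (M₂ ∪ {s(A, B)}) := by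
  simp only [splitMatchings, Finset.mem_image, Finset.mem_product, mem_ncMatchings, Prod.exists]
  grind

lemma mk_mem_of_mem_splitMatchings (hM : M ∈ splitMatchings A B S) : s(A, B) ∈ M := by
  obtain ⟨M₁, M₂, -, -, rfl⟩ := mem_splitMatchings.1 hM
  simp

lemma isNCMatching_of_mem_splitMatchings (hS : GeneralPosition S) (hA : A ∈ S) (hB : B ∈ S)
    (hAB : A ≠ B) (hM : M ∈ splitMatchings A B S) : IsNCMatching S M := by
  obtain ⟨M₁, M₂, hM₁, hM₂, rfl⟩ := mem_splitMatchings.1 hM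
  exact isNCMatching_split hS hA hB hAB hM₁ hM₂

lemma card_splitMatchings (hAB : A ≠ B) :
    (splitMatchings A B S).card = pm (leftOf A B S) * pm (leftOf B A S) := by
  rw [splitMatchings, Finset.card_image_of_injOn, Finset.card_product, card_ncMatchings,
    card_ncMatchings]
  rintro ⟨M₁, M₂⟩ hM ⟨N₁, N₂⟩ hN h
  simp only [Finset.coe_product, Set.mem_prod, Finset.mem_coe, mem_ncMatchings] at hM hN
  have hpair : Disjoint (leftOf B A S) {A, B} := by
    simp [left_notMem_leftOf, right_notMem_leftOf]
  obtain ⟨h₁, h₂⟩ := hM.1.union_inj hN.1 (isNCMatching_leftOf_union_pair hAB hM.2)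
    (isNCMatching_leftOf_union_pair hAB hN.2) (disjoint_leftOf_pair A B S) h
  exact Prod.ext h₁ (hM.2.union_inj hN.2 (isNCMatching_pair_s10 hAB) (isNCMatching_pair_s10 hAB) hpair h₂).1

lemma not_piercedAt_of_mem_splitMatchings (hS : GeneralPosition S) (hA : A ∈ S) (hB : B ∈ S)
    (hAB : A ≠ B) (hM : M ∈ splitMatchings A B S) : ¬ PiercedAt A M := by
  rintro ⟨Q, C, D, hAQ, hCD, hC, hD⟩
  obtain rfl := (isNCMatching_of_mem_splitMatchings hS hA hB hAB hM).partner_unique hAQ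
    (mk_mem_of_mem_splitMatchings hM)
  obtain ⟨M₁, M₂, hM₁, hM₂, rfl⟩ := mem_splitMatchings.1 hM
  rcases Finset.mem_union.1 hCD with h | h
  · exact hD.not_gt (mem_leftOf.1 (hM₁.mem_of_mem h (Sym2.mem_mk_right C D))).2
  · have hC' := (isNCMatching_leftOf_union_pair hAB hM₂).mem_of_mem h (Sym2.mem_mk_left C D)
    exact hC.not_ge (sideOf_nonpos_of_mem_leftOf_union_pair hC')

lemma sum_pm_mul_pm_le_card_not_piercedAt (hS : GeneralPosition S) (hA : A ∈ S) :
    ∑ B ∈ S.erase A, pm (leftOf A B S) * pm (leftOf B A S) ≤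
      ((ncMatchings S).filter (¬ PiercedAt A ·)).card := by
  have hnc : ∀ B ∈ S.erase A, ∀ M ∈ splitMatchings A B S, IsNCMatching S M := fun B hB M hM =>
    isNCMatching_of_mem_splitMatchings hS hA (Finset.mem_of_mem_erase hB)
      (Finset.ne_of_mem_erase hB).symm hM
  have hdisj : (↑(S.erase A) : Set Pt).PairwiseDisjoint (splitMatchings A · S) := by
    intro B hB C _ hBC
    refine Finset.disjoint_left.2 fun M hMB hMC => hBC ?_
    exact (hnc B hB M hMB).partner_unique (mk_mem_of_mem_splitMatchings hMB)
      (mk_mem_of_mem_splitMatchings hMC)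
  calc ∑ B ∈ S.erase A, pm (leftOf A B S) * pm (leftOf B A S)
      = ((S.erase A).biUnion (splitMatchings A · S)).card := by
        rw [Finset.card_biUnion hdisj]
        exact Finset.sum_congr rfl fun B hB =>
          (card_splitMatchings (Finset.ne_of_mem_erase hB).symm).symm
    _ ≤ ((ncMatchings S).filter (¬ PiercedAt A ·)).card := by
        refine Finset.card_le_card fun M hM => ?_
        obtain ⟨B, hB, hMB⟩ := Finset.mem_biUnion.1 hM
        exact Finset.mem_filter.2 ⟨mem_ncMatchings.2 (hnc B hB M hMB),
          not_piercedAt_of_mem_splitMatchings hS hA (Finset.mem_of_mem_erase hB)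
            (Finset.ne_of_mem_erase hB).symm hMB⟩

open Finset.HasAntidiagonal (antidiagonal mem_antidiagonal) in
lemma catalan_succ_le_sum_pm_mul_pm (hS : GeneralPosition S) (hA : A ∈ hullVertices S) {n : ℕ}
    (hcard : S.card = 2 * (n + 1))
    (ih : ∀ m ≤ n, ∀ T : Finset Pt, GeneralPosition T → T.card = 2 * m → catalan m ≤ pm T) :
    catalan (n + 1) ≤ ∑ B ∈ S.erase A, pm (leftOf A B S) * pm (leftOf B A S) := by
  choose! b hb hrank using fun i (hi : i ≤ n) =>
    exists_card_leftOf_eq hS hA (i := 2 * i) (by omega)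
  have hbinj : Set.InjOn (fun ij : ℕ × ℕ => b ij.2) (antidiagonal n : Finset (ℕ × ℕ)) := by
    intro i hi j hj hij
    simp only [Finset.mem_coe, mem_antidiagonal] at hi hj
    have hi' := hrank i.2 (by omega)
    have hj' := hrank j.2 (by omega)
    simp only at hij
    rw [hij] at hi'
    ext <;> omega
  calc catalan (n + 1) = ∑ ij ∈ antidiagonal n, catalan ij.1 * catalan ij.2 :=
        catalan_succ' n
    _ ≤ ∑ ij ∈ antidiagonal n, pm (leftOf A (b ij.2) S) * pm (leftOf (b ij.2) A S) := by
        refine Finset.sum_le_sum fun ij hij => ?_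
        rw [mem_antidiagonal] at hij
        obtain ⟨hbA, hbS⟩ := Finset.mem_erase.1 (hb ij.2 (by omega))
        have hright := hrank ij.2 (by omega)
        have hleft := card_leftOf_add_card_leftOf_swap hS (hullVertices_subset S hA) hbS hbA.symm
        exact Nat.mul_le_mul
          (ih ij.1 (by omega) _ (hS.mono (leftOf_subset _ _ _)) (by omega))
          (ih ij.2 (by omega) _ (hS.mono (leftOf_subset _ _ _)) hright)
    _ = ∑ B ∈ (antidiagonal n).image fun ij => b ij.2,
          pm (leftOf A B S) * pm (leftOf B A S) :=
        (Finset.sum_image (f := fun B => pm (leftOf A B S) * pm (leftOf B A S)) hbinj).symm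
    _ ≤ ∑ B ∈ S.erase A, pm (leftOf A B S) * pm (leftOf B A S) := by
        refine Finset.sum_le_sum_of_subset (Finset.image_subset_iff.2 fun ij hij => hb ij.2 ?_)
        rw [mem_antidiagonal] at hij
        omega

theorem catalan_le_pm {k : ℕ} : ∀ {S : Finset Pt}, GeneralPosition S → S.card = 2 * k →
    catalan k ≤ pm S := by
  induction k using Nat.strong_induction_on with
  | _ k ih =>
    intro S hS hcard
    rcases k with _ | n
    · obtain rfl : S = ∅ := by simpa using hcard
      rw [catalan_zero, ← card_ncMatchings, Nat.succ_le_iff, Finset.card_pos]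
      exact ⟨∅, mem_ncMatchings.2 isNCMatching_empty⟩
    · obtain ⟨A, hA⟩ := hullVertices_nonempty (Finset.card_pos.1 (by omega : 0 < S.card))
      calc catalan (n + 1)
          ≤ ∑ B ∈ S.erase A, pm (leftOf A B S) * pm (leftOf B A S) :=
            catalan_succ_le_sum_pm_mul_pm hS hA hcard fun m hm T hT hTcard =>
              ih m (by omega) hT hTcard
        _ ≤ ((ncMatchings S).filter (¬ PiercedAt A ·)).card :=
            sum_pm_mul_pm_le_card_not_piercedAt hS (hullVertices_subset S hA)
        _ ≤ pm S := (Finset.card_filter_le _ _).trans (card_ncMatchings S).le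

theorem catalan_lt_pm_of_piercedAt {k : ℕ} (hS : GeneralPosition S) (hcard : S.card = 2 * k)
    (hA : A ∈ hullVertices S) (hM : IsNCMatching S M) (hpierced : PiercedAt A M) :
    catalan k < pm S := by
  have hAS := hullVertices_subset S hA
  obtain ⟨n, rfl⟩ : ∃ n, k = n + 1 :=
    Nat.exists_eq_succ_of_ne_zero fun hk => by simp_all
  calc catalan (n + 1)
      ≤ ∑ B ∈ S.erase A, pm (leftOf A B S) * pm (leftOf B A S) :=
        catalan_succ_le_sum_pm_mul_pm hS hA hcard fun _ _ _ hT hTcard => catalan_le_pm hT hTcard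
    _ ≤ ((ncMatchings S).filter (¬ PiercedAt A ·)).card :=
        sum_pm_mul_pm_le_card_not_piercedAt hS hAS
    _ < (ncMatchings S).card := Finset.card_lt_card <| Finset.filter_ssubset.2
        ⟨M, mem_ncMatchings.2 hM, not_not.2 hpierced⟩
    _ = pm S := card_ncMatchings S

lemma catalan_pos (n : ℕ) : 0 < catalan n :=
  pos_of_mul_pos_right ((succ_mul_catalan_eq_centralBinom n).symm ▸ Nat.centralBinom_pos n)
    (Nat.zero_le (n + 1))

lemma exists_isNCMatching (hS : GeneralPosition S) (hcard : Even S.card) :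
    ∃ M, IsNCMatching S M := by
  obtain ⟨k, hk⟩ := even_iff_exists_two_mul.1 hcard
  have hpos := (catalan_pos k).trans_le (catalan_le_pm hS hk)
  rw [← card_ncMatchings, Finset.card_pos] at hpos
  exact hpos.imp fun M => mem_ncMatchings.1

lemma exists_isNCMatching_mk_mem (hS : GeneralPosition S) (hA : A ∈ S) (hB : B ∈ S) (hAB : A ≠ B)
    (hleft : Even (leftOf A B S).card) (hright : Even (leftOf B A S).card) :
    ∃ M, IsNCMatching S M ∧ s(A, B) ∈ M := by
  obtain ⟨M₁, hM₁⟩ := exists_isNCMatching (hS.mono (leftOf_subset A B S)) hleft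
  obtain ⟨M₂, hM₂⟩ := exists_isNCMatching (hS.mono (leftOf_subset B A S)) hright
  exact ⟨_, isNCMatching_split hS hA hB hAB hM₁ hM₂, by simp⟩

end Counting

/-! ### Pierced matchings -/

section Pierced

variable {S : Finset Pt} {A B C Q r x : Pt}

/- Two sides with an odd number of points are balanced by a hull edge that crosses the line `AQ`. -/
lemma exists_piercedAt_of_odd (hS : GeneralPosition S) (heven : Even S.card) (hA : A ∈ S)
    (hQ : Q ∈ S) (hQv : Q ∉ hullVertices S) (hAQ : A ≠ Q) (hodd : Odd (leftOf A Q S).card) :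
    ∃ M, IsNCMatching S M ∧ PiercedAt A M := by
  obtain ⟨D, C, hDC, hD, hC⟩ := exists_isHullEdge_crossing hS hA hQ hQv hAQ
  have hAT : A ∈ (S.erase D).erase C := by
    have : A ≠ C ∧ A ≠ D := ⟨by rintro rfl; simp at hC, by rintro rfl; simp at hD⟩
    simp [this, hA]
  have hQT : Q ∈ (S.erase D).erase C := by
    have : Q ≠ C ∧ Q ≠ D := ⟨by rintro rfl; simp at hC, by rintro rfl; simp at hD⟩
    simp [this, hQ]
  have hleft : leftOf A Q ((S.erase D).erase C) = (leftOf A Q S).erase C := by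
    ext x
    simp only [mem_leftOf, Finset.mem_erase]
    grind
  have hright : leftOf Q A ((S.erase D).erase C) = (leftOf Q A S).erase D := by
    ext x
    simp only [mem_leftOf, Finset.mem_erase, sideOf_swap_pos]
    grind
  have hcard := card_leftOf_add_card_leftOf_swap hS hA hQ hAQ
  obtain ⟨M, hM, hAQM⟩ := exists_isNCMatching_mk_mem (hS.mono (by grind)) hAT hQT hAQ
    (by
      rw [hleft, Finset.card_erase_of_mem (mem_leftOf.2 ⟨hDC.right_mem, hC⟩)]
      grind)
    (by
      rw [hright, Finset.card_erase_of_mem (mem_leftOf.2 ⟨hDC.left_mem, sideOf_swap_pos.2 hD⟩)]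
      grind)
  exact ⟨_, hDC.isNCMatching hM, Q, C, D, Finset.mem_union_left _ hAQM, by simp [Sym2.eq_swap],
    hC, hD⟩

lemma notMem_hullVertices_of_sideOf_pos (hA : A ∈ S) (hB : B ∈ S) (hC : C ∈ S)
    (hAB : 0 < sideOf A B x) (hBC : 0 < sideOf B C x) (hCA : 0 < sideOf C A x) :
    x ∉ hullVertices S := by
  intro hx
  rw [← sideOf_rotate, ← sideOf_rotate] at hAB hBC hCA
  have hAC := sideOf_pos_trans hx hA hB hC hAB hBC
  rw [sideOf_swap_right x A C] at hCA
  linarith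

/- Take `q` last in the angular order around `B` among the interior points in the triangle `ABr`. -/
lemma exists_leftOf_leftOf_eq_empty (hAB : IsHullEdge S A B) (hr : r ∈ S) (hQ : Q ∈ S)
    (hQv : Q ∉ hullVertices S) (hrA : 0 < sideOf r A Q) (hBr : 0 < sideOf B r Q) :
    ∃ q ∈ leftOf r A S, 0 < sideOf B r q ∧ leftOf B q (leftOf r A S) = ∅ := by
  obtain ⟨q, hq, hmax⟩ := Finset.exists_max_image
    ((leftOf r A S).filter fun x => 0 < sideOf B r x ∧ x ∉ hullVertices S)
    (fun x => (leftOf x B S).card) ⟨Q, Finset.mem_filter.2 ⟨mem_leftOf.2 ⟨hQ, hrA⟩, hBr, hQv⟩⟩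
  obtain ⟨hq, hBq, -⟩ := Finset.mem_filter.1 hq
  refine ⟨q, hq, hBq, Finset.eq_empty_of_forall_notMem fun x hx => ?_⟩
  obtain ⟨hxr, hqx⟩ := mem_leftOf.1 hx
  obtain ⟨hxS, hrAx⟩ := mem_leftOf.1 hxr
  have hB := hAB.mem_hullVertices.2
  have hqS := leftOf_subset r A S hq
  have hBx := sideOf_pos_trans hB hr hqS hxS hBq hqx
  have hABx := hAB.sideOf_pos x hxS (by rintro rfl; simp at hrAx) (by rintro rfl; simp at hBx)
  have hxv := notMem_hullVertices_of_sideOf_pos hAB.left_mem hAB.right_mem hr hABx hBx hrAx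
  exact (card_leftOf_lt_of_sideOf_pos hB hqS hxS hqx).not_ge
    (hmax x (Finset.mem_filter.2 ⟨hxr, hBx, hxv⟩))

lemma exists_piercedAt_of_leftOf_leftOf_eq_empty (hS : GeneralPosition S)
    (hAB : IsHullEdge S A B) (hr : r ∈ S) (hrA : r ≠ A) (hrB : r ≠ B)
    (hleft : Even (leftOf A r S).card) (hright : Even (leftOf r A S).card)
    (hQ : Q ∈ leftOf r A S) (hBQ : 0 < sideOf B r Q) (hempty : leftOf B Q (leftOf r A S) = ∅) :
    ∃ M, IsNCMatching S M ∧ PiercedAt B M := by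
  obtain ⟨hQS, hrAQ⟩ := mem_leftOf.1 hQ
  have hQA : Q ≠ A := by rintro rfl; simp at hrAQ
  have hQB : Q ≠ B := by rintro rfl; simp at hBQ
  have hgp := hS.mono (leftOf_subset r A S)
  have hB : B ∈ leftOf r A S :=
    mem_leftOf_rotate.2 ⟨hAB.right_mem, hAB.sideOf_pos r hr hrA hrB⟩
  have hcard := card_leftOf_add_card_leftOf_swap hgp hB hQ hQB.symm
  obtain ⟨N, hN, hBQN⟩ := exists_isNCMatching_mk_mem hgp hB hQ hQB.symm (by simp [hempty])
    (by rw [hempty, Finset.card_empty] at hcard; grind)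
  obtain ⟨M, hM⟩ := exists_isNCMatching (hS.mono (leftOf_subset A r S)) hleft
  refine ⟨_, isNCMatching_split hS hAB.left_mem hr hrA.symm hM hN, Q, A, r, by simp [hBQN],
    by simp, ?_, ?_⟩
  · rw [sideOf_rotate]
    exact hAB.sideOf_pos Q hQS hQA hQB
  · rwa [sideOf_swap_right, neg_lt_zero]

lemma exists_piercedAt_of_two_notMem_hullVertices (hS : GeneralPosition S) (heven : Even S.card)
    (hQ : Q ∈ S) (hQv : Q ∉ hullVertices S) (hr : r ∈ S) (hrv : r ∉ hullVertices S) (hrQ : r ≠ Q) :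
    ∃ P ∈ hullVertices S, ∃ M, IsNCMatching S M ∧ PiercedAt P M := by
  obtain ⟨A, B, hAB, hA, hB⟩ := exists_isHullEdge_crossing hS hr hQ hQv hrQ
  obtain ⟨hAv, hBv⟩ := hAB.mem_hullVertices
  have hrA : r ≠ A := fun h => hrv (h ▸ hAv)
  have hrB : r ≠ B := fun h => hrv (h ▸ hBv)
  rcases Nat.even_or_odd (leftOf A r S).card with hleft | hodd
  · have hcard := card_leftOf_add_card_leftOf_swap hS hAB.left_mem hr hrA.symm
    have hrAQ : 0 < sideOf r A Q := by rwa [sideOf_swap_right r Q A, neg_pos]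
    have hBrQ : 0 < sideOf B r Q := by rwa [← sideOf_rotate]
    obtain ⟨q, hq, hBq, hempty⟩ := exists_leftOf_leftOf_eq_empty hAB hr hQ hQv hrAQ hBrQ
    exact ⟨B, hBv, exists_piercedAt_of_leftOf_leftOf_eq_empty hS hAB hr hrA hrB hleft (by grind)
      hq hBq hempty⟩
  · exact ⟨A, hAv, exists_piercedAt_of_odd hS heven hAB.left_mem hr hrv hrA.symm hodd⟩

lemma sum_card_leftOf_comm (S : Finset Pt) (Q : Pt) :
    ∑ P ∈ S.erase Q, (leftOf Q P S).card = ∑ P ∈ S.erase Q, (leftOf P Q S).card := by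
  have hself : leftOf Q Q S = ∅ := by simp [leftOf, sideOf]
  rw [Finset.sum_erase S (f := fun P => (leftOf Q P S).card) (by simp [hself]),
    Finset.sum_erase S (f := fun P => (leftOf P Q S).card) (by simp [hself])]
  have hrotate : ∀ P, leftOf P Q S = S.filter fun X => 0 < sideOf Q X P := fun P => by
    ext X
    rw [mem_leftOf_rotate, Finset.mem_filter]
  simp only [hrotate, Finset.card_filter]
  simp only [leftOf, Finset.card_filter]
  exact Finset.sum_comm

lemma exists_odd_card_leftOf (hS : GeneralPosition S) (hQ : Q ∈ S) {k : ℕ}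
    (hcard : S.card = 2 * k) (hk : Even k) : ∃ P ∈ S, P ≠ Q ∧ Odd (leftOf P Q S).card := by
  by_contra! hall
  have heven : Even (∑ P ∈ S.erase Q, (leftOf P Q S).card) :=
    Finset.even_sum _ fun P hP => Nat.not_odd_iff_even.1 <|
      hall P (Finset.mem_of_mem_erase hP) (Finset.ne_of_mem_erase hP)
  have htotal : ∑ P ∈ S.erase Q, ((leftOf P Q S).card + (leftOf Q P S).card + 2) =
      (S.erase Q).card * S.card :=
    Finset.sum_eq_card_nsmul fun P hP => card_leftOf_add_card_leftOf_swap hS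
      (Finset.mem_of_mem_erase hP) hQ (Finset.ne_of_mem_erase hP)
  rw [Finset.sum_add_distrib, Finset.sum_add_distrib, sum_card_leftOf_comm, Finset.sum_const,
    Finset.card_erase_of_mem hQ, hcard, smul_eq_mul] at htotal
  have hpos : 0 < S.card := Finset.card_pos.2 ⟨Q, hQ⟩
  have hsum : ∑ P ∈ S.erase Q, (leftOf P Q S).card + (2 * k - 1) = (2 * k - 1) * k := by linarith
  have hodd : Odd (2 * k - 1) := by grind
  exact Nat.not_even_iff_odd.2 (heven.add_odd hodd) (hsum ▸ hk.mul_left (2 * k - 1))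

lemma exists_piercedAt_of_even_half (hS : GeneralPosition S) {k : ℕ} (hcard : S.card = 2 * k)
    (hk : Even k) (hQ : Q ∈ S) (hQv : Q ∉ hullVertices S) :
    ∃ P ∈ S, P ≠ Q ∧ ∃ M, IsNCMatching S M ∧ PiercedAt P M := by
  obtain ⟨P, hP, hPQ, hodd⟩ := exists_odd_card_leftOf hS hQ hcard hk
  exact ⟨P, hP, hPQ, exists_piercedAt_of_odd hS (hcard ▸ even_two_mul k) hP hQ hQv hPQ hodd⟩

lemma exists_subset_card_le_three_mem_convexHull (hQ : Q ∈ convexHull ℝ (S : Set Pt)) :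
    ∃ T ⊆ S, T.card ≤ 3 ∧ Q ∈ convexHull ℝ (T : Set Pt) := by
  refine ⟨Caratheodory.minCardFinsetOfMemConvexHull hQ, ?_, ?_,
    Caratheodory.mem_minCardFinsetOfMemConvexHull hQ⟩
  · exact_mod_cast Caratheodory.minCardFinsetOfMemConvexHull_subseteq hQ
  · have h := (Caratheodory.affineIndependent_minCardFinsetOfMemConvexHull hQ).card_le_finrank_succ
    simpa using h.trans (Nat.succ_le_succ (Submodule.finrank_le _))

/- Removing a hull edge away from a triangle around `Q` keeps `Q` interior and makes half the number
of points even. -/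
lemma exists_piercedAt_of_odd_half (hS : GeneralPosition S) {k : ℕ} (hcard : S.card = 2 * k)
    (hk : Odd k) (hk₅ : 5 ≤ k) (hQ : Q ∈ S) (hQv : Q ∉ hullVertices S)
    (hv : (hullVertices S).card + 1 = S.card) :
    ∃ P ∈ S, P ≠ Q ∧ ∃ M, IsNCMatching S M ∧ PiercedAt P M := by
  have hQhull := mem_convexHull_erase_of_notMem_hullVertices hQ hQv
  obtain ⟨T, hTS, hT, hQT⟩ := exists_subset_card_le_three_mem_convexHull hQhull
  obtain ⟨X, Y, hXY, hXT, hYT⟩ := exists_isHullEdge_notMem hS (T := T) (by omega) (by omega)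
  have hQX : Q ≠ X := fun h => hQv (h ▸ hXY.mem_hullVertices.1)
  have hQY : Q ≠ Y := fun h => hQv (h ▸ hXY.mem_hullVertices.2)
  have hQv' : Q ∉ hullVertices ((S.erase X).erase Y) := fun h =>
    (mem_hullVertices.1 h).2 (convexHull_mono (by
      intro x hx
      have := hTS hx
      simp only [Finset.mem_coe] at *
      grind) hQT)
  have hcard' : ((S.erase X).erase Y).card = 2 * (k - 1) := by
    rw [Finset.card_erase_of_mem (by simp [hXY.right_mem, hXY.ne.symm]),
      Finset.card_erase_of_mem hXY.left_mem]
    omega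
  obtain ⟨P, hP, hPQ, M, hM, Q', C, D, hPQ', hCD, hside⟩ := exists_piercedAt_of_even_half
    (hS.mono (by grind)) hcard' (by grind) (by grind) hQv'
  exact ⟨P, by grind, hPQ, _, hXY.isNCMatching hM, Q', C, D, Finset.mem_union_left _ hPQ',
    Finset.mem_union_left _ hCD, hside⟩

lemma exceptionalAt_of_forall_even (hS : GeneralPosition S) (hcard : S.card = 6) (hQ : Q ∈ S)
    (hQv : Q ∉ hullVertices S) (hv : ∀ P ∈ S, P ≠ Q → P ∈ hullVertices S)
    (heven : ∀ P ∈ S, P ≠ Q → Even (leftOf P Q S).card) : ExceptionalAt S Q := by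
  have hQint := mem_interior_of_notMem_hullVertices hS hQ hQv
  refine ⟨Set.eq_singleton_iff_unique_mem.2 ⟨⟨hQ, hQint⟩, fun P ⟨hP, hPint⟩ => ?_⟩,
    fun P hP hPQ => ?_⟩
  · by_contra hPQ
    exact notMem_interior_of_mem_hullVertices (hv P hP hPQ) hQ (Ne.symm hPQ) hPint
  · have hsum := card_leftOf_add_card_leftOf_swap hS hP hQ hPQ
    obtain ⟨hright, hleft⟩ := leftOf_nonempty_of_notMem_hullVertices hS hQ hQv hP hPQ
    have hcards : (leftOf Q P S).card = 2 ∧ (leftOf P Q S).card = 2 := by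
      have := heven P hP hPQ
      have := hright.card_pos
      have := hleft.card_pos
      grind
    refine ⟨hcards.1, ?_⟩
    simpa only [leftOf, sideOf_swap_pos] using hcards.2

lemma exists_piercedAt_of_forall_mem_hullVertices (hS : GeneralPosition S) {k : ℕ}
    (hcard : S.card = 2 * k) (hexc : ¬ (k = 3 ∧ Exceptional S)) (hQ : Q ∈ S)
    (hQv : Q ∉ hullVertices S) (hv : ∀ P ∈ S, P ≠ Q → P ∈ hullVertices S) :
    ∃ P ∈ S, P ≠ Q ∧ ∃ M, IsNCMatching S M ∧ PiercedAt P M := by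
  rcases Nat.even_or_odd k with hk | hk
  · exact exists_piercedAt_of_even_half hS hcard hk hQ hQv
  have hvS : hullVertices S = S.erase Q := by
    ext P
    have := @hullVertices_subset S P
    grind
  have hvcard : (hullVertices S).card + 1 = S.card := by
    rw [hvS, Finset.card_erase_add_one hQ]
  by_cases hk₅ : 5 ≤ k
  · exact exists_piercedAt_of_odd_half hS hcard hk hk₅ hQ hQv hvcard
  have hQhull := mem_convexHull_erase_of_notMem_hullVertices hQ hQv
  have hthree := three_le_card_of_mem_convexHull hS hQ subset_rfl hQhull
  obtain rfl : k = 3 := by grind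
  obtain ⟨P, hP, hPQ, hodd⟩ : ∃ P ∈ S, P ≠ Q ∧ Odd (leftOf P Q S).card := by
    by_contra! h
    exact hexc ⟨rfl, Q, hQ, exceptionalAt_of_forall_even hS hcard hQ hQv hv fun P hP hPQ =>
      Nat.not_odd_iff_even.1 (h P hP hPQ)⟩
  exact ⟨P, hP, hPQ, exists_piercedAt_of_odd hS (hcard ▸ even_two_mul 3) hP hQ hQv hPQ hodd⟩

end Pierced

/-- If a set `S` of `2k` points in general position is neither
in convex position nor (for `k = 3`) of the exceptional order type, then
`pm S > C_k`. -/
theorem catalan_lt_pm_of_not_convex_not_exceptional (k : ℕ) (S : Finset Pt)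
    (hcard : S.card = 2 * k) (hgp : GeneralPosition S)
    (hconv : ¬ ConvexPosition S) (hexc : ¬ (k = 3 ∧ Exceptional S)) :
    catalan k < pm S := by
  obtain ⟨Q, hQ, hQv⟩ : ∃ Q ∈ S, Q ∉ hullVertices S := by
    by_contra! h
    exact hconv fun p hp => (mem_hullVertices.1 (h p hp)).2
  obtain ⟨P, hP, M, hM, hpierced⟩ : ∃ P ∈ hullVertices S, ∃ M, IsNCMatching S M ∧
      PiercedAt P M := by
    by_cases hv : ∀ P ∈ S, P ≠ Q → P ∈ hullVertices S
    · obtain ⟨P, hP, hPQ, hM⟩ :=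
        exists_piercedAt_of_forall_mem_hullVertices hgp hcard hexc hQ hQv hv
      exact ⟨P, hv P hP hPQ, hM⟩
    · push Not at hv
      obtain ⟨r, hr, hrQ, hrv⟩ := hv
      exact exists_piercedAt_of_two_notMem_hullVertices hgp (hcard ▸ even_two_mul k) hQ hQv hr hrv
        hrQ
  exact catalan_lt_pm_of_piercedAt hgp hcard hP hM hpierced
end
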